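/- arXiv:1208.2210 — 2 statements merged into one kernel-verified Lean document; each statement's English description precedes it below -/
import Mathlib

section
/- For every complex number q with |q| < 1, ∑_{n=0}^∞ PD(3n + 1) q^n = (q^3; q^6)_∞^3 (q^6; q^6)_∞^6 / ((q; q^2)_∞^5 (q^2; q^2)_∞^8) · ( 4 q (q; q^2)_∞^2 / (q^3; q^6)_∞^6 + (q^3; q^6)_∞^3 / (q; q^2)_∞ ). -/
open Finset

/-- The number of partitions of `n` with designated summands. -/
def PD (n : ℕ) : ℕ :=
  ∑ p : Nat.Partition n, ∏ k ∈ p.parts.toFinset, p.parts.count k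

/-- The q-shifted factorial `(a; q)_∞ = ∏_{n=0}^∞ (1 - a qⁿ)`. -/
noncomputable def qPoch (a q : ℂ) : ℂ := ∏' n : ℕ, (1 - a * q ^ n)

/-!
Each part size `k` contributes `1 + y / (1 - y)² = (1 - y⁶) / ((1 - y) (1 - y²) (1 - y³))` with
`y = x ^ k` to the generating function, so with `E_k = (x^k; x^k)_∞` we have
`∑ PD(n) x^n = E₆ / (E₁ E₂ E₃)`. The denominator factor `E₁ E₂` is the product `φ(-x) ψ(x)` of two
theta functions; splitting both theta series by residues modulo 3 and evaluating the pieces with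
Jacobi's triple product gives `E₁ E₂ = C(x³) (1 - 2t) (1 + t)`, where `t = x c(x³)` and
`c(q) = (q; q²)_∞ / (q³; q⁶)_∞³` is Ramanujan's cubic continued fraction up to a power of `q`.
Multiplying this over the three cube roots of `x³` evaluates `(1 - 8t³) (1 + t³)` as a product,
which turns the reciprocal of `E₁ E₂` into
`C'(x³) (1 + 2t + 4t²) (1 - t + t²) = C'(x³) (1 + t + 3t² - 2t³ + 4t⁴)`. The exponents congruent to
1 modulo 3 come from `t + 4t⁴`.
-/

/-! ### Finite products and Gaussian binomial coefficients -/

/-- The finite q-shifted factorial `(a; q)_n = ∏_{k=0}^{n-1} (1 - a q^k)`. -/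
def qPochhammer {R : Type*} [CommRing R] (a q : R) (n : ℕ) : R :=
  ∏ k ∈ range n, (1 - a * q ^ k)

/-- The Gaussian binomial coefficient, defined for all `q` by the `q`-analogue of Pascal's rule. -/
def gaussBinom {R : Type*} [CommSemiring R] (q : R) : ℕ → ℕ → R
  | _, 0 => 1
  | 0, _ + 1 => 0
  | n + 1, k + 1 => q ^ (k + 1) * gaussBinom q n (k + 1) + gaussBinom q n k

section QPochhammer

variable {R : Type*} [CommRing R] (a q : R)

@[simp]
lemma qPochhammer_zero : qPochhammer a q 0 = 1 := prod_range_zero _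

lemma qPochhammer_succ (n : ℕ) :
    qPochhammer a q (n + 1) = qPochhammer a q n * (1 - a * q ^ n) :=
  prod_range_succ _ _

lemma qPochhammer_succ' (n : ℕ) :
    qPochhammer a q (n + 1) = (1 - a) * qPochhammer (a * q) q n := by
  simp only [qPochhammer, prod_range_succ', pow_succ', pow_zero, mul_one, mul_assoc]
  rw [mul_comm]

lemma qPochhammer_add (m n : ℕ) :
    qPochhammer a q (m + n) = qPochhammer a q m * qPochhammer (a * q ^ m) q n := by
  simp only [qPochhammer, prod_range_add, pow_add, mul_assoc]

lemma qPochhammer_mul (m n : ℕ) :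
    qPochhammer a q (m * n) = ∏ j ∈ range m, qPochhammer (a * q ^ j) (q ^ m) n := by
  induction n with
  | zero => simp
  | succ n ih =>
    simp only [mul_add_one, qPochhammer_succ, prod_mul_distrib, ← ih, qPochhammer_add]
    congr 1
    exact prod_congr rfl fun j _ => by ring

lemma prod_one_sub_pow_mul_of_isPrimitiveRoot [IsDomain R] {ζ : R} {m : ℕ} (hm : 0 < m)
    (hζ : IsPrimitiveRoot ζ m) : ∏ j ∈ range m, (1 - ζ ^ j * a) = 1 - a ^ m := by
  classical
  have h := hζ.pow_sub_pow_eq_prod_sub_mul 1 a hm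
  rw [one_pow] at h
  rw [h, Polynomial.nthRootsFinset_def, prod_eq_multiset_prod (Multiset.toFinset _),
    Multiset.toFinset_val, hζ.nthRoots_one_nodup.dedup, hζ.nthRoots_eq (one_pow m)]
  simp [prod_eq_multiset_prod]

lemma prod_qPochhammer_of_isPrimitiveRoot [IsDomain R] {ζ : R} {m : ℕ} (hm : 0 < m)
    (hζ : IsPrimitiveRoot ζ m) (n : ℕ) :
    ∏ j ∈ range m, qPochhammer (ζ ^ j * a) q n = qPochhammer (a ^ m) (q ^ m) n := by
  simp only [qPochhammer]
  rw [prod_comm]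
  refine prod_congr rfl fun k _ => ?_
  rw [← pow_mul, mul_comm m, pow_mul, ← mul_pow, ← prod_one_sub_pow_mul_of_isPrimitiveRoot _ hm hζ]
  exact prod_congr rfl fun j _ => by ring

end QPochhammer

section GaussBinom

@[simp]
lemma gaussBinom_zero_right {R : Type*} [CommSemiring R] (q : R) (n : ℕ) :
    gaussBinom q n 0 = 1 := by
  cases n <;> rfl

lemma gaussBinom_succ_succ {R : Type*} [CommSemiring R] (q : R) (n k : ℕ) :
    gaussBinom q (n + 1) (k + 1) = q ^ (k + 1) * gaussBinom q n (k + 1) + gaussBinom q n k :=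
  rfl

lemma gaussBinom_eq_zero_of_lt {R : Type*} [CommSemiring R] (q : R) {n k : ℕ} (h : n < k) :
    gaussBinom q n k = 0 := by
  induction n generalizing k with
  | zero => obtain ⟨k, rfl⟩ := Nat.exists_eq_add_one_of_ne_zero h.ne'; rfl
  | succ n ih =>
    obtain ⟨k, rfl⟩ := Nat.exists_eq_add_one_of_ne_zero (Nat.ne_zero_of_lt h)
    rw [gaussBinom_succ_succ, ih (by lia), ih (by lia), mul_zero, add_zero]

@[simp]
lemma gaussBinom_self {R : Type*} [CommSemiring R] (q : R) (n : ℕ) : gaussBinom q n n = 1 := by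
  induction n with
  | zero => rfl
  | succ n ih => rw [gaussBinom_succ_succ, gaussBinom_eq_zero_of_lt q n.lt_succ_self, ih]; ring

theorem gaussBinom_add_mul_qPochhammer {R : Type*} [CommRing R] (q : R) (m n : ℕ) :
    gaussBinom q (m + n) m * (qPochhammer q q m * qPochhammer q q n) = qPochhammer q q (m + n) := by
  induction m generalizing n with
  | zero => simp
  | succ m ihm =>
    induction n with
    | zero => simp
    | succ n ihn =>
      have ihm := ihm (n + 1)
      rw [show m + (n + 1) = m + 1 + n by ring] at ihm
      rw [← add_assoc, gaussBinom_succ_succ, qPochhammer_succ q q (m + 1 + n)]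
      simp only [qPochhammer_succ] at ihm ihn ⊢
      linear_combination q ^ (m + 1) * (1 - q * q ^ n) * ihn + (1 - q * q ^ m) * ihm

/-- **Rothe's identity**, the finite `q`-binomial theorem. -/
theorem prod_one_add_mul_pow {R : Type*} [CommSemiring R] (q x : R) (n : ℕ) :
    ∏ k ∈ range n, (1 + x * q ^ k) =
      ∑ j ∈ range (n + 1), gaussBinom q n j * (q ^ j.choose 2 * x ^ j) := by
  induction n generalizing x with
  | zero => simp
  | succ n ih =>
    have choose_two (j : ℕ) : (j + 1).choose 2 = j + j.choose 2 := by
      rw [Nat.choose_succ_succ', Nat.choose_one_right]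
    have tail : ∏ k ∈ range n, (1 + x * q ^ (k + 1)) =
        ∑ j ∈ range (n + 1), gaussBinom q n j * (q ^ j.choose 2 * (x * q) ^ j) := by
      rw [← ih]
      exact prod_congr rfl fun k _ => by ring
    have tail' : ∏ k ∈ range n, (1 + x * q ^ (k + 1)) = ∑ j ∈ range (n + 1),
        gaussBinom q n (j + 1) * (q ^ (j + 1).choose 2 * (x * q) ^ (j + 1)) + 1 := by
      rw [tail, sum_range_succ', sum_range_succ _ n, gaussBinom_eq_zero_of_lt q n.lt_succ_self]
      simp
    rw [prod_range_succ', sum_range_succ', pow_zero, mul_one, mul_add, mul_one]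
    nth_rewrite 1 [tail']
    rw [tail, sum_mul, add_right_comm, ← sum_add_distrib]
    congr 1
    · refine sum_congr rfl fun j _ => ?_
      rw [gaussBinom_succ_succ, choose_two]
      ring
    · simp

end GaussBinom

open Filter Topology

/-! ### Infinite products -/

/-- Euler's product `(q; q)_∞`. -/
noncomputable def eulerFun (q : ℂ) : ℂ := qPoch q q

section QPoch

variable {a q : ℂ}

lemma norm_pow_lt_one (hq : ‖q‖ < 1) {n : ℕ} (hn : n ≠ 0) : ‖q ^ n‖ < 1 := by
  rw [norm_pow]
  exact pow_lt_one₀ (norm_nonneg q) hq hn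

lemma summable_norm_neg_mul_pow (a : ℂ) (hq : ‖q‖ < 1) :
    Summable fun n : ℕ => ‖-(a * q ^ n)‖ := by
  simp only [norm_neg, norm_mul, norm_pow]
  exact (summable_geometric_of_lt_one (norm_nonneg q) hq).mul_left _

lemma tendsto_qPochhammer (a : ℂ) (hq : ‖q‖ < 1) :
    Tendsto (qPochhammer a q) atTop (𝓝 (qPoch a q)) := by
  have h := multipliable_one_add_of_summable (summable_norm_neg_mul_pow a hq)
  simp only [← sub_eq_add_neg] at h
  exact h.hasProd.tendsto_prod_nat

lemma one_sub_mul_pow_ne_zero (ha : ‖a‖ < 1) (hq : ‖q‖ < 1) (n : ℕ) : 1 - a * q ^ n ≠ 0 := by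
  have h : ‖a * q ^ n‖ < 1 := by
    rw [norm_mul, norm_pow]
    exact mul_lt_one_of_nonneg_of_lt_one_left (norm_nonneg a) ha
      (pow_le_one₀ (norm_nonneg q) hq.le)
  rw [sub_ne_zero]
  rintro h'
  simp [← h'] at h

lemma qPochhammer_ne_zero (ha : ‖a‖ < 1) (hq : ‖q‖ < 1) (n : ℕ) : qPochhammer a q n ≠ 0 :=
  prod_ne_zero_iff.2 fun k _ => one_sub_mul_pow_ne_zero ha hq k

lemma qPoch_ne_zero (ha : ‖a‖ < 1) (hq : ‖q‖ < 1) : qPoch a q ≠ 0 := by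
  have h := tprod_one_add_ne_zero_of_summable (f := fun n : ℕ => -(a * q ^ n))
    (fun n => by simpa only [← sub_eq_add_neg] using one_sub_mul_pow_ne_zero ha hq n)
    (summable_norm_neg_mul_pow a hq)
  simpa only [← sub_eq_add_neg, qPoch] using h

lemma qPoch_eq_one_sub_mul (a : ℂ) (hq : ‖q‖ < 1) : qPoch a q = (1 - a) * qPoch (a * q) q :=
  tendsto_nhds_unique ((tendsto_qPochhammer a hq).comp (tendsto_add_atTop_nat 1))
    (((tendsto_qPochhammer (a * q) hq).const_mul (1 - a)).congr fun n =>
      (qPochhammer_succ' a q n).symm)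

lemma qPoch_eq_prod_range (a : ℂ) (hq : ‖q‖ < 1) {m : ℕ} (hm : 0 < m) :
    qPoch a q = ∏ j ∈ range m, qPoch (a * q ^ j) (q ^ m) :=
  tendsto_nhds_unique ((tendsto_qPochhammer a hq).comp (tendsto_id.const_mul_atTop' hm))
    ((tendsto_finsetProd _ fun j _ =>
      tendsto_qPochhammer (a * q ^ j) (norm_pow_lt_one hq hm.ne')).congr fun n =>
        (qPochhammer_mul a q m n).symm)

lemma prod_qPoch_of_isPrimitiveRoot (a : ℂ) (hq : ‖q‖ < 1) {ζ : ℂ} {m : ℕ} (hm : 0 < m)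
    (hζ : IsPrimitiveRoot ζ m) :
    ∏ j ∈ range m, qPoch (ζ ^ j * a) q = qPoch (a ^ m) (q ^ m) :=
  tendsto_nhds_unique (tendsto_finsetProd _ fun _ _ => tendsto_qPochhammer _ hq)
    ((tendsto_qPochhammer (a ^ m) (norm_pow_lt_one hq hm.ne')).congr fun n =>
      (prod_qPochhammer_of_isPrimitiveRoot a q hm hζ n).symm)

lemma qPoch_mul_qPoch_neg (a : ℂ) (hq : ‖q‖ < 1) :
    qPoch a q * qPoch (-a) q = qPoch (a ^ 2) (q ^ 2) := by
  simpa [prod_range_succ] using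
    prod_qPoch_of_isPrimitiveRoot a hq (m := 2) (by norm_num)
      (IsPrimitiveRoot.neg_one 0 (by norm_num))

end QPoch

section EulerFun

variable {q : ℂ}

lemma eulerFun_ne_zero (hq : ‖q‖ < 1) : eulerFun q ≠ 0 := qPoch_ne_zero hq hq

lemma eulerFun_pow_ne_zero (hq : ‖q‖ < 1) {n : ℕ} (hn : n ≠ 0) : eulerFun (q ^ n) ≠ 0 :=
  eulerFun_ne_zero (norm_pow_lt_one hq hn)

lemma eulerFun_eq_prod_mul (hq : ‖q‖ < 1) (m : ℕ) :
    eulerFun q = (∏ j ∈ range m, qPoch (q ^ (j + 1)) (q ^ (m + 1))) * eulerFun (q ^ (m + 1)) := by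
  rw [eulerFun, qPoch_eq_prod_range q hq m.succ_pos, prod_range_succ, eulerFun, ← pow_succ']
  simp only [pow_succ']

lemma qPoch_sq_mul_eulerFun_sq (hq : ‖q‖ < 1) :
    qPoch q (q ^ 2) * eulerFun (q ^ 2) = eulerFun q := by
  simpa using (eulerFun_eq_prod_mul hq 1).symm

lemma qPoch_neg_mul_eulerFun (hq : ‖q‖ < 1) : qPoch (-q) q * eulerFun q = eulerFun (q ^ 2) := by
  rw [mul_comm, eulerFun, qPoch_mul_qPoch_neg q hq, eulerFun]

lemma prod_eulerFun_of_isPrimitiveRoot (hq : ‖q‖ < 1) {ζ : ℂ} {p : ℕ} (hp : p.Prime)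
    (hζ : IsPrimitiveRoot ζ p) :
    (∏ j ∈ range p, eulerFun (ζ ^ j * q)) * eulerFun (q ^ (p * p)) =
      eulerFun (q ^ p) ^ (p + 1) := by
  obtain ⟨n, rfl⟩ : ∃ n, p = n + 1 := Nat.exists_eq_add_one_of_ne_zero hp.ne_zero
  have hqp := norm_pow_lt_one hq hp.ne_zero
  have factor (j : ℕ) : eulerFun (ζ ^ j * q) =
      (∏ i ∈ range n, qPoch ((ζ ^ (i + 1)) ^ j * q ^ (i + 1)) (q ^ (n + 1))) *
        eulerFun (q ^ (n + 1)) := by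
    have hjq : ‖ζ ^ j * q‖ < 1 := by simpa [hζ.norm'_eq_one hp.ne_zero] using hq
    have hpow : (ζ ^ j * q) ^ (n + 1) = q ^ (n + 1) := by
      rw [mul_pow, pow_right_comm, hζ.pow_eq_one, one_pow, one_mul]
    rw [eulerFun_eq_prod_mul hjq n, hpow]
    simp only [mul_pow, pow_right_comm ζ j]
  have swap : ∏ j ∈ range (n + 1), ∏ i ∈ range n,
      qPoch ((ζ ^ (i + 1)) ^ j * q ^ (i + 1)) (q ^ (n + 1)) =
        ∏ i ∈ range n, qPoch ((q ^ (n + 1)) ^ (i + 1)) ((q ^ (n + 1)) ^ (n + 1)) := by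
    rw [Finset.prod_comm]
    refine prod_congr rfl fun i hi => ?_
    have hco : (i + 1).Coprime (n + 1) := .symm <|
      Nat.coprime_of_lt_prime i.succ_ne_zero (by simpa using hi) hp
    rw [prod_qPoch_of_isPrimitiveRoot _ hqp hp.pos (hζ.pow_of_coprime _ hco), pow_right_comm]
  simp only [factor]
  rw [prod_mul_distrib, swap, prod_const, card_range, pow_mul, mul_right_comm,
    ← eulerFun_eq_prod_mul hqp n, ← pow_succ']

end EulerFun

/-! ### Jacobi's triple product identity -/

/-- The general term `z^n q^{n(n-1)/2}` of the theta series. -/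
def thetaTerm {K : Type*} [Field K] (z q : K) (n : ℤ) : K := z ^ n * q ^ (n * (n - 1) / 2)

/-- The theta series `∑_{n ∈ ℤ} z^n q^{n(n-1)/2}`. -/
noncomputable def theta (z q : ℂ) : ℂ := ∑' n : ℤ, thetaTerm z q n

/-- The Gaussian binomial coefficient `[2N, N + n]`, extended by zero to all integers `n`. -/
def centralGaussBinom {R : Type*} [CommSemiring R] (q : R) (N : ℕ) (n : ℤ) : R :=
  if -(N : ℤ) ≤ n then gaussBinom q (N + N) (n + N).toNat else 0

section ThetaTerm

variable {K : Type*} [Field K] {z q : K}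

lemma two_mul_triangle (n : ℤ) : 2 * (n * (n - 1) / 2) = n * (n - 1) :=
  Int.mul_ediv_cancel' (Int.even_mul_pred_self n).two_dvd

@[simp]
lemma thetaTerm_zero (z q : K) : thetaTerm z q 0 = 1 := by simp [thetaTerm]

lemma thetaTerm_ne_zero (hz : z ≠ 0) (hq : q ≠ 0) (n : ℤ) : thetaTerm z q n ≠ 0 :=
  mul_ne_zero (zpow_ne_zero _ hz) (zpow_ne_zero _ hq)

lemma thetaTerm_add_one (hz : z ≠ 0) (hq : q ≠ 0) (n : ℤ) :
    thetaTerm z q (n + 1) = thetaTerm z q n * (z * q ^ n) := by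
  have h : (n + 1) * (n + 1 - 1) / 2 = n * (n - 1) / 2 + n := by
    linarith [two_mul_triangle (n + 1), two_mul_triangle n]
  rw [thetaTerm, thetaTerm, h, zpow_add₀ hq, zpow_add_one₀ hz]
  ring

lemma thetaTerm_neg (hq : q ≠ 0) (n : ℤ) : thetaTerm z q (-n) = thetaTerm (q / z) q n := by
  have h : -n * (-n - 1) / 2 = n + n * (n - 1) / 2 := by
    linarith [two_mul_triangle (-n), two_mul_triangle n]
  rw [thetaTerm, thetaTerm, h, zpow_add₀ hq, div_zpow, zpow_neg]
  ring

lemma thetaTerm_mul_add (hz : z ≠ 0) (hq : q ≠ 0) (m r : ℕ) (n : ℤ) :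
    thetaTerm z q (n * m + r) = z ^ r * q ^ r.choose 2 *
      thetaTerm (z ^ m * q ^ (m * r + m.choose 2)) (q ^ m ^ 2) n := by
  have choose_two (k : ℕ) : (k.choose 2 : ℤ) = k * (k - 1) / 2 := by
    cases k <;> simp [Nat.choose_two_right]
  have h : (n * m + r) * (n * m + r - 1) / 2 =
      r.choose 2 + ((m * r + m.choose 2 : ℕ) * n + (m ^ 2 : ℕ) * (n * (n - 1) / 2)) := by
    push_cast [choose_two]
    have hm := two_mul_triangle m
    have hr := two_mul_triangle r
    have hn := two_mul_triangle n
    have hmr := two_mul_triangle (n * m + r)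
    refine mul_left_cancel₀ two_ne_zero ?_
    linear_combination hmr - hr - n * hm - m ^ 2 * hn
  rw [thetaTerm, thetaTerm, h, zpow_add₀ hq, zpow_add₀ hq, zpow_add₀ hz, mul_zpow]
  simp only [zpow_mul, zpow_natCast, mul_comm n]
  ring

lemma thetaTerm_natCast_sub (hz : z ≠ 0) (hq : q ≠ 0) (j N : ℕ) :
    thetaTerm z q (j - N) = thetaTerm z q (-N) * (q ^ j.choose 2 * (z / q ^ N) ^ j) := by
  induction j with
  | zero => simp
  | succ j ih =>
    rw [Nat.cast_succ, add_sub_right_comm, thetaTerm_add_one hz hq, ih, zpow_sub₀ hq,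
      zpow_natCast, zpow_natCast, Nat.choose_succ_succ', Nat.choose_one_right]
    ring

lemma thetaTerm_neg_mul_prod (hz : z ≠ 0) (hq : q ≠ 0) (N : ℕ) :
    thetaTerm z q (-N) * ∏ k ∈ range N, (1 + z / q ^ N * q ^ k) = qPochhammer (-(q / z)) q N := by
  induction N with
  | zero => simp
  | succ N ih =>
    have shift : ∏ k ∈ range N, (1 + z / q ^ (N + 1) * q ^ (k + 1)) =
        ∏ k ∈ range N, (1 + z / q ^ N * q ^ k) :=
      prod_congr rfl fun k _ => by field_simp; ring
    rw [qPochhammer_succ, ← ih, prod_range_succ', shift, Nat.cast_succ, thetaTerm_neg hq,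
      thetaTerm_neg hq, thetaTerm_add_one (div_ne_zero hq hz) hq, zpow_natCast]
    field_simp
    ring

theorem qPochhammer_mul_qPochhammer_eq_sum (hz : z ≠ 0) (hq : q ≠ 0) (N : ℕ) :
    qPochhammer (-z) q N * qPochhammer (-(q / z)) q N =
      ∑ j ∈ range (N + N + 1), thetaTerm z q (j - N) * gaussBinom q (N + N) j := by
  have rothe := prod_one_add_mul_pow q (z / q ^ N) (N + N)
  have upper : ∏ k ∈ range N, (1 + z / q ^ N * q ^ (N + k)) = qPochhammer (-z) q N :=
    prod_congr rfl fun k _ => by rw [pow_add]; field_simp; ring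
  rw [prod_range_add, upper] at rothe
  rw [← thetaTerm_neg_mul_prod hz hq, mul_left_comm, mul_comm (qPochhammer _ _ _), rothe, mul_sum]
  refine sum_congr rfl fun j _ => ?_
  rw [thetaTerm_natCast_sub hz hq]
  ring

end ThetaTerm

section JacobiTripleProduct

variable {z q : ℂ}

lemma tsum_thetaTerm_mul_centralGaussBinom (hz : z ≠ 0) (hq : q ≠ 0) (N : ℕ) :
    ∑' n : ℤ, thetaTerm z q n * centralGaussBinom q N n =
      qPochhammer (-z) q N * qPochhammer (-(q / z)) q N := by
  have inj : Function.Injective fun j : ℕ => (j : ℤ) - N := fun a b h => by simpa using h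
  rw [qPochhammer_mul_qPochhammer_eq_sum hz hq, ← inj.tsum_eq]
  · rw [tsum_eq_sum (s := range (N + N + 1))]
    · exact sum_congr rfl fun j _ => by simp [centralGaussBinom]
    · intro j hj
      rw [mem_range, not_lt] at hj
      simp [centralGaussBinom, gaussBinom_eq_zero_of_lt q (Nat.lt_of_succ_le hj)]
  · intro n hn
    have hNn : -(N : ℤ) ≤ n := by
      by_contra h
      simp [centralGaussBinom, h] at hn
    exact ⟨(n + N).toNat, by dsimp only; lia⟩

lemma gaussBinom_eq_div (hq : ‖q‖ < 1) (m n : ℕ) :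
    gaussBinom q (m + n) m =
      qPochhammer q q (m + n) * ((qPochhammer q q m)⁻¹ * (qPochhammer q q n)⁻¹) := by
  have hm := qPochhammer_ne_zero hq hq m
  have hn := qPochhammer_ne_zero hq hq n
  rw [← gaussBinom_add_mul_qPochhammer]
  field_simp

lemma exists_norm_gaussBinom_le (hq : ‖q‖ < 1) : ∃ C, ∀ n k, ‖gaussBinom q n k‖ ≤ C := by
  have lim := tendsto_qPochhammer q hq
  obtain ⟨A, hA⟩ := lim.norm.bddAbove_range
  obtain ⟨B, hB⟩ := (lim.inv₀ (eulerFun_ne_zero hq)).norm.bddAbove_range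
  have hA (n : ℕ) : ‖qPochhammer q q n‖ ≤ A := hA ⟨n, rfl⟩
  have hB (n : ℕ) : ‖(qPochhammer q q n)⁻¹‖ ≤ B := hB ⟨n, rfl⟩
  have hA₀ : 0 ≤ A := (norm_nonneg _).trans (hA 0)
  have hB₀ : 0 ≤ B := (norm_nonneg _).trans (hB 0)
  refine ⟨A * (B * B), fun n k => ?_⟩
  obtain hk | hk := lt_or_ge n k
  · rw [gaussBinom_eq_zero_of_lt q hk, norm_zero]
    positivity
  · obtain ⟨l, rfl⟩ := Nat.exists_eq_add_of_le hk
    rw [gaussBinom_eq_div hq, norm_mul, norm_mul]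
    gcongr
    exacts [hA _, hB _, hB _]

lemma exists_norm_centralGaussBinom_le (hq : ‖q‖ < 1) :
    ∃ C, ∀ N n, ‖centralGaussBinom q N n‖ ≤ C := by
  obtain ⟨C, hC⟩ := exists_norm_gaussBinom_le hq
  refine ⟨C, fun N n => ?_⟩
  rw [centralGaussBinom]
  split_ifs
  · exact hC _ _
  · simpa using (norm_nonneg _).trans (hC 0 0)

lemma tendsto_centralGaussBinom (hq : ‖q‖ < 1) (n : ℤ) :
    Tendsto (centralGaussBinom q · n) atTop (𝓝 (eulerFun q)⁻¹) := by
  have lim := tendsto_qPochhammer q hq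
  have hE := eulerFun_ne_zero hq
  have top_add : Tendsto (fun N : ℕ => N + N) atTop atTop := tendsto_id.atTop_add_atTop tendsto_id
  have top_left : Tendsto (fun N : ℕ => (n + N).toNat) atTop atTop :=
    tendsto_atTop.2 fun b => (eventually_ge_atTop (b + n.natAbs)).mono fun N h => by lia
  have top_right : Tendsto (fun N : ℕ => (N - n).toNat) atTop atTop :=
    tendsto_atTop.2 fun b => (eventually_ge_atTop (b + n.natAbs)).mono fun N h => by lia
  have lim' := (lim.comp top_add).mul
    (((lim.comp top_left).inv₀ hE).mul ((lim.comp top_right).inv₀ hE))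
  rw [← eulerFun, mul_inv_cancel_left₀ hE] at lim'
  refine lim'.congr' ((eventually_ge_atTop n.natAbs).mono fun N hN => ?_)
  have h := gaussBinom_eq_div hq (n + N).toNat (N - n).toNat
  rw [show (n + N).toNat + (N - n).toNat = N + N by lia] at h
  simp only [centralGaussBinom, if_pos (show -(N : ℤ) ≤ n by lia), h, Function.comp_apply]

lemma summable_norm_thetaTerm (hz : z ≠ 0) (hq₀ : q ≠ 0) (hq : ‖q‖ < 1) :
    Summable fun n => ‖thetaTerm z q n‖ := by
  have nonneg_part {w : ℂ} (hw : w ≠ 0) : Summable fun n : ℕ => ‖thetaTerm w q n‖ := by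
    refine summable_of_ratio_test_tendsto_lt_one zero_lt_one
      (.of_forall fun n => norm_ne_zero_iff.2 (thetaTerm_ne_zero hw hq₀ n)) ?_
    have lim := (tendsto_pow_atTop_nhds_zero_of_lt_one (norm_nonneg q) hq).const_mul ‖w‖
    rw [mul_zero] at lim
    refine lim.congr fun n => ?_
    rw [norm_norm, norm_norm, Nat.cast_succ, thetaTerm_add_one hw hq₀, norm_mul,
      mul_div_cancel_left₀ _ (norm_ne_zero_iff.2 (thetaTerm_ne_zero hw hq₀ n)), norm_mul,
      zpow_natCast, norm_pow]
  refine .of_nat_of_neg (nonneg_part hz) ?_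
  simpa only [thetaTerm_neg hq₀] using nonneg_part (div_ne_zero hq₀ hz)

/-- **Jacobi's triple product identity**. -/
theorem theta_eq_qPoch_mul (hz : z ≠ 0) (hq₀ : q ≠ 0) (hq : ‖q‖ < 1) :
    theta z q = qPoch (-z) q * qPoch (-(q / z)) q * eulerFun q := by
  obtain ⟨C, hC⟩ := exists_norm_centralGaussBinom_le hq
  have lim_sum : Tendsto (fun N => ∑' n : ℤ, thetaTerm z q n * centralGaussBinom q N n) atTop
      (𝓝 (∑' n : ℤ, thetaTerm z q n * (eulerFun q)⁻¹)) := by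
    refine tendsto_tsum_of_dominated_convergence
      ((summable_norm_thetaTerm hz hq₀ hq).mul_right C)
      (fun n => (tendsto_centralGaussBinom hq n).const_mul _) (.of_forall fun N n => ?_)
    rw [norm_mul]
    gcongr
    exact hC _ _
  have lim_prod := (tendsto_qPochhammer (-z) hq).mul (tendsto_qPochhammer (-(q / z)) hq)
  simp only [← tsum_thetaTerm_mul_centralGaussBinom hz hq₀] at lim_prod
  rw [tendsto_nhds_unique lim_prod lim_sum, tsum_mul_right, ← theta,
    inv_mul_cancel_right₀ (eulerFun_ne_zero hq)]

lemma theta_div (hq₀ : q ≠ 0) (z : ℂ) : theta (q / z) q = theta z q := by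
  simp only [theta, ← thetaTerm_neg hq₀]
  exact (Equiv.neg ℤ).tsum_eq _

lemma mul_theta_mul (hz : z ≠ 0) (hq₀ : q ≠ 0) : z * theta (z * q) q = theta z q := by
  rw [theta, theta, ← tsum_mul_left, ← (Equiv.addRight (1 : ℤ)).tsum_eq (thetaTerm z q)]
  refine tsum_congr fun n => ?_
  rw [Equiv.coe_addRight, thetaTerm_add_one hz hq₀, thetaTerm, thetaTerm, mul_zpow]
  ring

theorem theta_dissection (hz : z ≠ 0) (hq₀ : q ≠ 0) (hq : ‖q‖ < 1) (m : ℕ) [NeZero m] :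
    theta z q = ∑ r ∈ range m, z ^ r * q ^ r.choose 2 *
      theta (z ^ m * q ^ (m * r + m.choose 2)) (q ^ m ^ 2) := by
  have hs : Summable fun p => thetaTerm z q ((Int.divModEquiv m).symm p) :=
    (summable_norm_thetaTerm hz hq₀ hq).of_norm.comp_injective (Int.divModEquiv m).symm.injective
  have hterm (n : ℤ) (r : Fin m) : thetaTerm z q ((Int.divModEquiv m).symm (n, r)) =
      z ^ (r : ℕ) * q ^ (r : ℕ).choose 2 *
        thetaTerm (z ^ m * q ^ (m * r + m.choose 2)) (q ^ m ^ 2) n :=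
    thetaTerm_mul_add hz hq₀ m r n
  have hs' (r : Fin m) : Summable fun n => thetaTerm z q ((Int.divModEquiv m).symm (n, r)) :=
    hs.comp_injective fun _ _ h => congrArg Prod.fst h
  rw [theta, ← (Int.divModEquiv m).symm.tsum_eq, hs.tsum_prod]
  simp only [tsum_fintype]
  rw [Summable.tsum_finsetSum fun r _ => hs' r, ← Fin.sum_univ_eq_sum_range]
  simp only [hterm, tsum_mul_left, theta]

end JacobiTripleProduct

/-! ### Theta functions with product expansions and their 3-dissections -/

/-- Ramanujan's cubic continued fraction in product form, without its leading factor `q^{1/3}`: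
`(q; q^2)_∞ / (q^3; q^6)_∞^3`. -/
noncomputable def cubicContFrac (q : ℂ) : ℂ := qPoch q (q ^ 2) / qPoch (q ^ 3) (q ^ 6) ^ 3

section CubicContFrac

variable {q : ℂ}

lemma qPoch_sq_eq_div (hq : ‖q‖ < 1) : qPoch q (q ^ 2) = eulerFun q / eulerFun (q ^ 2) :=
  eq_div_of_mul_eq (eulerFun_pow_ne_zero hq two_ne_zero) (qPoch_sq_mul_eulerFun_sq hq)

lemma qPoch_neg_eq_div (hq : ‖q‖ < 1) : qPoch (-q) q = eulerFun (q ^ 2) / eulerFun q :=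
  eq_div_of_mul_eq (eulerFun_ne_zero hq) (qPoch_neg_mul_eulerFun hq)

lemma cubicContFrac_eq_div (hq : ‖q‖ < 1) :
    cubicContFrac q =
      eulerFun q * eulerFun (q ^ 6) ^ 3 / (eulerFun (q ^ 2) * eulerFun (q ^ 3) ^ 3) := by
  have h := qPoch_sq_eq_div (norm_pow_lt_one hq three_ne_zero)
  rw [← pow_mul] at h
  rw [cubicContFrac, qPoch_sq_eq_div hq, h]
  field_simp

lemma theta_neg_sq (hq₀ : q ≠ 0) (hq : ‖q‖ < 1) :
    theta (-q) (q ^ 2) = eulerFun q ^ 2 / eulerFun (q ^ 2) := by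
  have hE := eulerFun_pow_ne_zero hq two_ne_zero
  rw [theta_eq_qPoch_mul (neg_ne_zero.2 hq₀) (pow_ne_zero 2 hq₀) (norm_pow_lt_one hq two_ne_zero),
    neg_neg, show -(q ^ 2 / -q) = q by field_simp, qPoch_sq_eq_div hq]
  field_simp

lemma theta_neg_pow_six (hq₀ : q ≠ 0) (hq : ‖q‖ < 1) :
    theta (-q) (q ^ 6) =
      eulerFun q * eulerFun (q ^ 6) ^ 2 / (eulerFun (q ^ 2) * eulerFun (q ^ 3)) := by
  have hE₃ := eulerFun_pow_ne_zero hq three_ne_zero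
  have hE₆ := eulerFun_pow_ne_zero hq (n := 6) (by norm_num)
  have hE₂ := eulerFun_pow_ne_zero hq two_ne_zero
  have odd : qPoch q (q ^ 2) = qPoch q (q ^ 6) * qPoch (q ^ 3) (q ^ 6) * qPoch (q ^ 5) (q ^ 6) := by
    rw [qPoch_eq_prod_range q (norm_pow_lt_one hq two_ne_zero) (m := 3) (by norm_num)]
    simp only [prod_range_succ, prod_range_zero]
    ring_nf
  have odd_cube := qPoch_sq_eq_div (norm_pow_lt_one hq three_ne_zero)
  rw [← pow_mul] at odd_cube
  rw [qPoch_sq_eq_div hq, odd_cube] at odd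
  rw [theta_eq_qPoch_mul (neg_ne_zero.2 hq₀) (pow_ne_zero 6 hq₀)
    (norm_pow_lt_one hq (by norm_num)), neg_neg, show -(q ^ 6 / -q) = q ^ 5 by field_simp]
  field_simp at odd ⊢
  linear_combination -odd

lemma theta_one (hq₀ : q ≠ 0) (hq : ‖q‖ < 1) :
    theta 1 q = 2 * eulerFun (q ^ 2) ^ 2 / eulerFun q := by
  have hE := eulerFun_ne_zero hq
  rw [theta_eq_qPoch_mul one_ne_zero hq₀ hq, div_one, qPoch_eq_one_sub_mul _ hq, neg_one_mul,
    qPoch_neg_eq_div hq]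
  field_simp
  ring

lemma theta_self_cube (hq₀ : q ≠ 0) (hq : ‖q‖ < 1) :
    theta q (q ^ 3) =
      eulerFun (q ^ 2) * eulerFun (q ^ 3) ^ 2 / (eulerFun q * eulerFun (q ^ 6)) := by
  have hE₁ := eulerFun_ne_zero hq
  have hE₃ := eulerFun_pow_ne_zero hq three_ne_zero
  have hE₆ := eulerFun_pow_ne_zero hq (n := 6) (by norm_num)
  have split : qPoch (-q) q = qPoch (-q) (q ^ 3) * qPoch (-q ^ 2) (q ^ 3) *
      qPoch (-q ^ 3) (q ^ 3) := by
    rw [qPoch_eq_prod_range (-q) hq (m := 3) (by norm_num)]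
    simp only [prod_range_succ, prod_range_zero]
    ring_nf
  have neg_cube := qPoch_neg_eq_div (norm_pow_lt_one hq three_ne_zero)
  rw [← pow_mul] at neg_cube
  rw [qPoch_neg_eq_div hq, neg_cube] at split
  rw [theta_eq_qPoch_mul hq₀ (pow_ne_zero 3 hq₀) (norm_pow_lt_one hq three_ne_zero),
    show -(q ^ 3 / q) = -q ^ 2 by field_simp]
  field_simp at split ⊢
  linear_combination -split

lemma theta_neg_sq_dissection (hq₀ : q ≠ 0) (hq : ‖q‖ < 1) :
    theta (-q) (q ^ 2) = theta (-q ^ 9) (q ^ 18) - 2 * q * theta (-q ^ 3) (q ^ 18) := by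
  have h₁ := theta_div (pow_ne_zero 18 hq₀) (-q ^ 3)
  have h₂ := mul_theta_mul (neg_ne_zero.2 (pow_ne_zero 3 hq₀)) (pow_ne_zero 18 hq₀)
  rw [show q ^ 18 / -q ^ 3 = -q ^ 15 by field_simp] at h₁
  rw [theta_dissection (neg_ne_zero.2 hq₀) (pow_ne_zero 2 hq₀) (norm_pow_lt_one hq two_ne_zero) 3]
  simp only [sum_range_succ, sum_range_zero, Nat.choose]
  ring_nf at h₁ h₂ ⊢
  linear_combination -q * h₁ - q * h₂

lemma theta_one_dissection (hq₀ : q ≠ 0) (hq : ‖q‖ < 1) :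
    theta 1 q = 2 * theta (q ^ 3) (q ^ 9) + q * theta 1 (q ^ 9) := by
  have h₁ := theta_div (pow_ne_zero 9 hq₀) (q ^ 3)
  have h₂ := mul_theta_mul one_ne_zero (pow_ne_zero 9 hq₀)
  rw [show q ^ 9 / q ^ 3 = q ^ 6 by field_simp] at h₁
  rw [theta_dissection one_ne_zero hq₀ hq 3]
  simp only [sum_range_succ, sum_range_zero, Nat.choose]
  ring_nf at h₁ h₂ ⊢
  linear_combination h₁ + q * h₂

lemma eulerFun_sq_div_dissection (hq₀ : q ≠ 0) (hq : ‖q‖ < 1) :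
    eulerFun q ^ 2 / eulerFun (q ^ 2) = eulerFun (q ^ 9) ^ 2 / eulerFun (q ^ 18) *
      (1 - 2 * (q * cubicContFrac (q ^ 3))) := by
  have hE {n : ℕ} (hn : n ≠ 0) := eulerFun_pow_ne_zero hq hn
  have h := theta_neg_sq_dissection hq₀ hq
  have h₃ := theta_neg_pow_six (pow_ne_zero 3 hq₀) (norm_pow_lt_one hq three_ne_zero)
  have h₉ := theta_neg_sq (pow_ne_zero 9 hq₀) (norm_pow_lt_one hq (n := 9) (by norm_num))
  have hc := cubicContFrac_eq_div (norm_pow_lt_one hq three_ne_zero)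
  simp only [← pow_mul, Nat.reduceMul] at h₃ h₉ hc
  have hE₉ := hE (n := 9) (by norm_num)
  have hE₁₈ := hE (n := 18) (by norm_num)
  rw [theta_neg_sq hq₀ hq, h₃, h₉] at h
  rw [h, hc]
  field_simp

lemma eulerFun_sq_sq_div_dissection (hq₀ : q ≠ 0) (hq : ‖q‖ < 1) :
    eulerFun (q ^ 2) ^ 2 / eulerFun q =
      eulerFun (q ^ 6) * eulerFun (q ^ 9) ^ 2 / (eulerFun (q ^ 3) * eulerFun (q ^ 18)) *
        (1 + q * cubicContFrac (q ^ 3)) := by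
  have hE {n : ℕ} (hn : n ≠ 0) := eulerFun_pow_ne_zero hq hn
  have h := theta_one_dissection hq₀ hq
  have h₃ := theta_self_cube (pow_ne_zero 3 hq₀) (norm_pow_lt_one hq three_ne_zero)
  have h₉ := theta_one (pow_ne_zero 9 hq₀) (norm_pow_lt_one hq (n := 9) (by norm_num))
  have hc := cubicContFrac_eq_div (norm_pow_lt_one hq three_ne_zero)
  simp only [← pow_mul, Nat.reduceMul] at h₃ h₉ hc
  have hE₃ := hE three_ne_zero
  have hE₆ := hE (n := 6) (by norm_num)
  have hE₉ := hE (n := 9) (by norm_num)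
  have hE₁₈ := hE (n := 18) (by norm_num)
  rw [theta_one hq₀ hq, h₃, h₉] at h
  rw [hc]
  field_simp at h ⊢
  linear_combination h

/-- The two dissections are multiplied in the form `φ(-q) ψ(q) = (q; q)_∞ (q²; q²)_∞`. -/
lemma eulerFun_mul_eulerFun_sq (hq₀ : q ≠ 0) (hq : ‖q‖ < 1) :
    eulerFun q * eulerFun (q ^ 2) =
      eulerFun (q ^ 6) * eulerFun (q ^ 9) ^ 4 / (eulerFun (q ^ 3) * eulerFun (q ^ 18) ^ 2) *
        ((1 - 2 * (q * cubicContFrac (q ^ 3))) * (1 + q * cubicContFrac (q ^ 3))) := by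
  have hE₁ := eulerFun_ne_zero hq
  have hE₂ := eulerFun_pow_ne_zero hq two_ne_zero
  calc eulerFun q * eulerFun (q ^ 2)
      = eulerFun q ^ 2 / eulerFun (q ^ 2) * (eulerFun (q ^ 2) ^ 2 / eulerFun q) := by field_simp
    _ = _ := by
      rw [eulerFun_sq_div_dissection hq₀ hq, eulerFun_sq_sq_div_dissection hq₀ hq]
      ring

lemma prod_eulerFun_mul_eulerFun_sq (hq : ‖q‖ < 1) {ω : ℂ} (hω : IsPrimitiveRoot ω 3) :
    ∏ j ∈ range 3, (eulerFun (ω ^ j * q) * eulerFun ((ω ^ j * q) ^ 2)) =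
      eulerFun (q ^ 3) ^ 4 * eulerFun (q ^ 6) ^ 4 / (eulerFun (q ^ 9) * eulerFun (q ^ 18)) := by
  have hE₉ := eulerFun_pow_ne_zero hq (n := 9) (by norm_num)
  have hE₁₈ := eulerFun_pow_ne_zero hq (n := 18) (by norm_num)
  have h₁ := prod_eulerFun_of_isPrimitiveRoot hq Nat.prime_three hω
  have h₂ := prod_eulerFun_of_isPrimitiveRoot (norm_pow_lt_one hq two_ne_zero) Nat.prime_three
    (hω.pow_of_coprime 2 (by norm_num))
  simp only [← pow_mul, Nat.reduceMul, Nat.reduceAdd] at h₁ h₂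
  simp only [mul_pow, ← pow_mul, prod_mul_distrib, mul_comm _ 2]
  rw [eq_div_of_mul_eq hE₉ h₁, eq_div_of_mul_eq hE₁₈ h₂]
  field_simp

theorem one_sub_mul_one_add_cubicContFrac {x : ℂ} (hx₀ : x ≠ 0) (hx : ‖x‖ < 1) :
    (eulerFun (x ^ 6) * eulerFun (x ^ 9) ^ 4 / (eulerFun (x ^ 3) * eulerFun (x ^ 18) ^ 2)) ^ 3 *
        ((1 - 8 * (x * cubicContFrac (x ^ 3)) ^ 3) * (1 + (x * cubicContFrac (x ^ 3)) ^ 3)) =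
      eulerFun (x ^ 3) ^ 4 * eulerFun (x ^ 6) ^ 4 / (eulerFun (x ^ 9) * eulerFun (x ^ 18)) := by
  obtain ⟨ω, hω⟩ : ∃ ω : ℂ, IsPrimitiveRoot ω 3 := ⟨_, Complex.isPrimitiveRoot_exp 3 three_ne_zero⟩
  have conj (j k : ℕ) : (ω ^ j * x) ^ (3 * k) = x ^ (3 * k) := by
    rw [mul_pow, ← pow_mul, mul_left_comm, pow_mul, hω.pow_eq_one, one_pow, one_mul]
  have hconj (j : ℕ) := eulerFun_mul_eulerFun_sq (q := ω ^ j * x)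
    (mul_ne_zero (pow_ne_zero j (hω.ne_zero three_ne_zero)) hx₀)
    (by simpa [hω.norm'_eq_one three_ne_zero] using hx)
  simp only [conj _ 1, conj _ 2, conj _ 3, conj _ 6] at hconj
  rw [← prod_eulerFun_mul_eulerFun_sq hx hω, prod_congr rfl fun j _ => hconj j, prod_mul_distrib,
    prod_const, card_range]
  have factor (y : ℂ) : ∏ j ∈ range 3, (1 - ω ^ j * y) = 1 - y ^ 3 :=
    prod_one_sub_pow_mul_of_isPrimitiveRoot y three_pos hω
  have h₁ := factor (2 * (x * cubicContFrac (x ^ 3)))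
  have h₂ := factor (-(x * cubicContFrac (x ^ 3)))
  rw [prod_mul_distrib]
  simp only [mul_neg, sub_neg_eq_add, mul_left_comm _ (2 : ℂ), ← mul_assoc] at h₁ h₂ ⊢
  rw [h₁, h₂]
  ring

theorem inv_eulerFun_mul_eulerFun_sq {x : ℂ} (hx₀ : x ≠ 0) (hx : ‖x‖ < 1) :
    (eulerFun x * eulerFun (x ^ 2))⁻¹ =
      eulerFun (x ^ 9) ^ 9 / (eulerFun (x ^ 3) ^ 6 * eulerFun (x ^ 6) ^ 2 * eulerFun (x ^ 18) ^ 3) *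
        ((1 + 2 * (x * cubicContFrac (x ^ 3)) + 4 * (x * cubicContFrac (x ^ 3)) ^ 2) *
          (1 - x * cubicContFrac (x ^ 3) + (x * cubicContFrac (x ^ 3)) ^ 2)) := by
  have hE₃ := eulerFun_pow_ne_zero hx three_ne_zero
  have hE₆ := eulerFun_pow_ne_zero hx (n := 6) (by norm_num)
  have hE₉ := eulerFun_pow_ne_zero hx (n := 9) (by norm_num)
  have hE₁₈ := eulerFun_pow_ne_zero hx (n := 18) (by norm_num)
  have hnorm := one_sub_mul_one_add_cubicContFrac hx₀ hx
  refine inv_eq_of_mul_eq_one_right ?_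
  rw [eulerFun_mul_eulerFun_sq hx₀ hx]
  field_simp at hnorm ⊢
  linear_combination hnorm

end CubicContFrac

/-! ### Generating functions of weighted partitions -/

open PowerSeries (X coeff coeff_mul coeff_one)
open scoped PowerSeries PowerSeries.WithPiTopology
open Nat.Partition (genFun coeff_genFun)

section CoeffSum

variable {R : Type*} [NormedCommRing R]

/-- The coefficients of `p` are absolutely summable, with sum `s`: the power series `p` takes the
value `s` at `1`. -/
def HasCoeffSum (p : R⟦X⟧) (s : R) : Prop :=
  Summable (fun n => ‖coeff n p‖) ∧ HasSum (fun n => coeff n p) s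

lemma HasCoeffSum.one : HasCoeffSum (1 : R⟦X⟧) 1 := by
  have h (n : ℕ) (hn : n ≠ 0) : coeff n (1 : R⟦X⟧) = 0 := by rw [coeff_one, if_neg hn]
  refine ⟨summable_of_ne_finset_zero (s := {0}) fun n hn => ?_, ?_⟩
  · rw [h n (by simpa using hn), norm_zero]
  · simpa using hasSum_single 0 h

lemma HasCoeffSum.add {p r : R⟦X⟧} {s t : R} (hp : HasCoeffSum p s) (hr : HasCoeffSum r t) :
    HasCoeffSum (p + r) (s + t) := by
  refine ⟨(hp.1.add hr.1).of_nonneg_of_le (fun _ => norm_nonneg _) fun n => ?_, ?_⟩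
  · rw [map_add]
    exact norm_add_le _ _
  · simpa only [map_add] using hp.2.add hr.2

lemma HasCoeffSum.mul [CompleteSpace R] {p r : R⟦X⟧} {s t : R} (hp : HasCoeffSum p s)
    (hr : HasCoeffSum r t) : HasCoeffSum (p * r) (s * t) := by
  have h := summable_norm_sum_mul_antidiagonal_of_summable_norm hp.1 hr.1
  simp only [HasCoeffSum, coeff_mul]
  refine ⟨h, ?_⟩
  rw [← hp.2.tsum_eq, ← hr.2.tsum_eq,
    tsum_mul_tsum_eq_tsum_sum_antidiagonal_of_summable_norm hp.1 hr.1]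
  exact h.of_norm.hasSum

lemma HasCoeffSum.prod [CompleteSpace R] {ι : Type*} {p : ι → R⟦X⟧} {s : ι → R} (t : Finset ι)
    (h : ∀ i ∈ t, HasCoeffSum (p i) (s i)) : HasCoeffSum (∏ i ∈ t, p i) (∏ i ∈ t, s i) := by
  classical
  induction t using Finset.induction_on with
  | empty => simpa only [prod_empty] using HasCoeffSum.one
  | insert i t hi ih =>
    rw [prod_insert hi, prod_insert hi]
    exact (h i (mem_insert_self i t)).mul (ih fun j hj => h j (mem_insert_of_mem hj))

end CoeffSum

section GenFun

lemma coeff_tsum_smul_X_pow {R : Type*} [CommSemiring R] [TopologicalSpace R] [T2Space R]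
    (f : ℕ → ℕ → R) (i m : ℕ) :
    coeff m (∑' j, f (i + 1) (j + 1) • (X : R⟦X⟧) ^ ((i + 1) * (j + 1))) =
      Function.extend (fun j => (i + 1) * (j + 1)) (fun j => f (i + 1) (j + 1)) 0 m := by
  have hinj : Function.Injective fun j => (i + 1) * (j + 1) := fun a b h => by simpa using h
  rw [(Nat.Partition.summable_genFun_term f i).map_tsum _
    (PowerSeries.WithPiTopology.continuous_coeff R m)]
  simp only [map_smul, PowerSeries.coeff_X_pow, smul_eq_mul, mul_ite, mul_one, mul_zero]
  by_cases hm : ∃ j, (i + 1) * (j + 1) = m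
  · obtain ⟨k, rfl⟩ := hm
    rw [hinj.extend_apply, tsum_eq_single k fun j hj => if_neg fun h => hj (hinj h.symm),
      if_pos rfl]
  · rw [Function.extend_apply' _ _ _ hm]
    exact (tsum_congr fun j => if_neg fun h => hm ⟨j, h.symm⟩).trans tsum_zero

lemma genFun_indicator_Iic {R : Type*} [CommSemiring R] [TopologicalSpace R] [T2Space R]
    (f : ℕ → ℕ → R) (N : ℕ) :
    genFun ((Set.Iic N).indicator f) =
      ∏ i ∈ range N, (1 + ∑' j, f (i + 1) (j + 1) • (X : R⟦X⟧) ^ ((i + 1) * (j + 1))) := by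
  rw [Nat.Partition.genFun_eq_tprod, tprod_eq_prod (s := range N)]
  · refine prod_congr rfl fun i hi => ?_
    rw [Set.indicator_of_mem (Set.mem_Iic.2 (mem_range.1 hi))]
  · intro i hi
    rw [Set.indicator_of_notMem (by simpa using hi)]
    simp

lemma coeff_genFun_indicator_Iic {R : Type*} [CommSemiring R] (f : ℕ → ℕ → R) {n N : ℕ}
    (h : n ≤ N) : coeff n (genFun ((Set.Iic N).indicator f)) = coeff n (genFun f) := by
  simp only [coeff_genFun, Finsupp.prod]
  refine sum_congr rfl fun p _ => prod_congr rfl fun i hi => ?_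
  have hip : i ∈ p.parts := by simpa using hi
  rw [Set.indicator_of_mem (Set.mem_Iic.2 ((p.le_of_mem_parts hip).trans h))]

lemma norm_coeff_genFun_indicator_le {R : Type*} [NormedCommRing R] [NormOneClass R]
    (f : ℕ → ℕ → R) (s : Set ℕ) (n : ℕ) :
    ‖coeff n (genFun (s.indicator f))‖ ≤ coeff n (genFun fun i c => ‖f i c‖) := by
  simp only [coeff_genFun, Finsupp.prod]
  refine (norm_sum_le _ _).trans (sum_le_sum fun p _ => (Finset.norm_prod_le _ _).trans ?_)
  refine prod_le_prod (fun _ _ => norm_nonneg _) fun i _ => ?_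
  by_cases hi : i ∈ s <;> simp [hi]

lemma coeff_genFun_nonneg {f : ℕ → ℕ → ℝ} (hf : ∀ i c, 0 ≤ f i c) (n : ℕ) :
    0 ≤ coeff n (genFun f) := by
  rw [coeff_genFun]
  exact sum_nonneg fun p _ => prod_nonneg fun i _ => hf i _

variable {R : Type*} [NormedCommRing R] {f : ℕ → ℕ → R}

lemma hasCoeffSum_genFun_indicator_Iic [CompleteSpace R]
    (hf : ∀ i, Summable fun j => ‖f (i + 1) (j + 1)‖) (N : ℕ) :
    HasCoeffSum (genFun ((Set.Iic N).indicator f))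
      (∏ i ∈ range N, (1 + ∑' j, f (i + 1) (j + 1))) := by
  rw [genFun_indicator_Iic]
  refine HasCoeffSum.prod _ fun i _ => HasCoeffSum.one.add ?_
  have hinj : Function.Injective fun j => (i + 1) * (j + 1) := fun a b h => by simpa using h
  simp only [HasCoeffSum, coeff_tsum_smul_X_pow]
  refine ⟨((summable_extend_zero hinj).2 (hf i)).congr fun m => ?_,
    (hasSum_extend_zero hinj).2 (hf i).of_norm.hasSum⟩
  rw [Function.apply_extend norm, show norm ∘ (0 : ℕ → R) = 0 from funext fun _ => norm_zero]
  rfl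

lemma tendsto_prod_one_add_tsum [NormOneClass R] [CompleteSpace R]
    (hf : Summable fun p : ℕ × ℕ => ‖f (p.1 + 1) (p.2 + 1)‖) :
    Tendsto (fun N => ∏ i ∈ range N, (1 + ∑' j, f (i + 1) (j + 1))) atTop
      (𝓝 (∏' i, (1 + ∑' j, f (i + 1) (j + 1)))) := by
  refine (multipliable_one_add_of_summable ?_).hasProd.tendsto_prod_nat
  exact hf.prod.of_nonneg_of_le (fun _ => norm_nonneg _) fun i =>
    norm_tsum_le_tsum_norm (hf.prod_factor i)

lemma summable_coeff_genFun {f : ℕ → ℕ → ℝ} (hf₀ : ∀ i c, 0 ≤ f i c)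
    (hf : Summable fun p : ℕ × ℕ => f (p.1 + 1) (p.2 + 1)) :
    Summable fun n => coeff n (genFun f) := by
  replace hf : Summable fun p : ℕ × ℕ => ‖f (p.1 + 1) (p.2 + 1)‖ := hf.norm
  obtain ⟨C, hC⟩ := (tendsto_prod_one_add_tsum hf).bddAbove_range
  refine summable_of_sum_range_le (c := C) (coeff_genFun_nonneg hf₀) fun N => ?_
  calc ∑ n ∈ range N, coeff n (genFun f)
      = ∑ n ∈ range N, coeff n (genFun ((Set.Iic N).indicator f)) :=
        sum_congr rfl fun n hn => (coeff_genFun_indicator_Iic f (mem_range.1 hn).le).symm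
    _ ≤ ∏ i ∈ range N, (1 + ∑' j, f (i + 1) (j + 1)) :=
        sum_le_hasSum _
          (fun n _ => coeff_genFun_nonneg (Set.indicator_nonneg (f := f) fun i _ => hf₀ i) n)
          (hasCoeffSum_genFun_indicator_Iic hf.prod_factor N).2
    _ ≤ C := hC ⟨N, rfl⟩

theorem summable_norm_coeff_genFun [NormOneClass R]
    (hf : Summable fun p : ℕ × ℕ => ‖f (p.1 + 1) (p.2 + 1)‖) :
    Summable fun n => ‖coeff n (genFun f)‖ :=
  (summable_coeff_genFun (fun _ _ => norm_nonneg _) hf).of_nonneg_of_le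
    (fun _ => norm_nonneg _) fun n => by
      simpa using norm_coeff_genFun_indicator_le f Set.univ n

theorem tsum_coeff_genFun [NormOneClass R] [CompleteSpace R]
    (hf : Summable fun p : ℕ × ℕ => ‖f (p.1 + 1) (p.2 + 1)‖) :
    ∑' n, coeff n (genFun f) = ∏' i, (1 + ∑' j, f (i + 1) (j + 1)) := by
  refine tendsto_nhds_unique ?_ (tendsto_prod_one_add_tsum hf)
  simp only [← (hasCoeffSum_genFun_indicator_Iic hf.prod_factor _).2.tsum_eq]
  refine tendsto_tsum_of_dominated_convergence
    (summable_coeff_genFun (fun _ _ => norm_nonneg _) hf) (fun n => ?_)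
    (Eventually.of_forall fun N n => norm_coeff_genFun_indicator_le f _ n)
  exact tendsto_const_nhds.congr' <| (eventually_ge_atTop n).mono fun N hN =>
    (coeff_genFun_indicator_Iic f hN).symm

end GenFun

section DesignatedSummands

lemma PD_one : PD 1 = 1 := by
  rw [PD, Fintype.sum_unique, Subsingleton.elim default (Nat.Partition.indiscrete 1),
    Nat.Partition.indiscrete_parts one_ne_zero]
  simp

lemma coeff_genFun_mul_pow {R : Type*} [CommSemiring R] (x : R) (n : ℕ) :
    coeff n (genFun fun i c => (c : R) * x ^ (i * c)) = PD n * x ^ n := by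
  rw [coeff_genFun, PD, Nat.cast_sum, sum_mul]
  refine sum_congr rfl fun p _ => ?_
  have hn : ∑ i ∈ p.parts.toFinset, i * p.parts.count i = n := by
    simpa [mul_comm, p.parts_sum] using (Finset.sum_multiset_count p.parts).symm
  simp [Finsupp.prod, prod_mul_distrib, prod_pow_eq_pow_sum, hn]

variable {x : ℂ}

lemma summable_norm_mul_pow_mul (hx : ‖x‖ < 1) :
    Summable fun p : ℕ × ℕ => ‖((p.2 + 1 : ℕ) : ℂ) * x ^ ((p.1 + 1) * (p.2 + 1))‖ := by
  have h := (summable_prod_mul_pow 1 hx).norm.comp_injective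
    (Equiv.pnatEquivNat.symm.prodCongr Equiv.pnatEquivNat.symm).injective
  refine h.congr fun p => ?_
  rw [Function.comp_apply, pow_one]
  rfl

lemma summable_norm_PD_mul_pow (hx : ‖x‖ < 1) : Summable fun n => ‖(PD n : ℂ) * x ^ n‖ := by
  simpa only [coeff_genFun_mul_pow] using
    summable_norm_coeff_genFun (f := fun i c => (c : ℂ) * x ^ (i * c))
      (summable_norm_mul_pow_mul hx)

lemma one_add_tsum_mul_pow {y : ℂ} (hy : ‖y‖ < 1) :
    1 + ∑' j : ℕ, ((j + 1 : ℕ) : ℂ) * y ^ (j + 1) =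
      (1 - y ^ 6) / ((1 - y) * (1 - y ^ 2) * (1 - y ^ 3)) := by
  have hne (m : ℕ) : 1 - y * y ^ m ≠ 0 := one_sub_mul_pow_ne_zero hy hy m
  have h₁ : 1 - y ≠ 0 := by simpa using hne 0
  have h₂ : 1 - y ^ 2 ≠ 0 := by simpa only [← pow_succ'] using hne 1
  have h₃ : 1 - y ^ 3 ≠ 0 := by simpa only [← pow_succ'] using hne 2
  have h := hasSum_coe_mul_geometric_of_norm_lt_one hy
  have hsum : ∑' j : ℕ, ((j + 1 : ℕ) : ℂ) * y ^ (j + 1) = y / (1 - y) ^ 2 := by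
    rw [← h.tsum_eq, h.summable.tsum_eq_zero_add, Nat.cast_zero, zero_mul, zero_add]
  rw [hsum]
  field_simp
  ring

theorem tsum_PD_mul_pow (hx : ‖x‖ < 1) :
    ∑' n, (PD n : ℂ) * x ^ n =
      eulerFun (x ^ 6) / (eulerFun x * eulerFun (x ^ 2) * eulerFun (x ^ 3)) := by
  have hsum := summable_norm_mul_pow_mul hx
  have gen := tsum_coeff_genFun (f := fun i c => (c : ℂ) * x ^ (i * c)) hsum
  have lim := tendsto_prod_one_add_tsum (f := fun i c => (c : ℂ) * x ^ (i * c)) hsum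
  simp only [coeff_genFun_mul_pow] at gen
  rw [← gen] at lim
  refine tendsto_nhds_unique lim ?_
  have hE {m : ℕ} (hm : m ≠ 0) := tendsto_qPochhammer (x ^ m) (norm_pow_lt_one hx hm)
  have h₁ := tendsto_qPochhammer x hx
  refine ((hE (m := 6) (by norm_num)).div
    ((h₁.mul (hE two_ne_zero)).mul (hE three_ne_zero)) ?_).congr fun N => ?_
  · exact mul_ne_zero (mul_ne_zero (eulerFun_ne_zero hx) (eulerFun_pow_ne_zero hx two_ne_zero))
      (eulerFun_pow_ne_zero hx three_ne_zero)
  · simp only [qPochhammer, Pi.div_apply, ← prod_mul_distrib, ← prod_div_distrib]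
    refine prod_congr rfl fun k _ => ?_
    have h := one_add_tsum_mul_pow (norm_pow_lt_one hx k.succ_ne_zero)
    simp only [← pow_mul, ← pow_succ', Nat.succ_eq_add_one] at h ⊢
    rw [h]
    ring

end DesignatedSummands

/-! ### Extraction of an arithmetic progression -/

section Extraction

lemma tsum_mul_pow_eq_sum_tsum {K : Type*} [NormedField K] [CompleteSpace K] {a : ℕ → K} {x : K}
    (h : Summable fun n => a n * x ^ n) (m : ℕ) [NeZero m] :
    ∑' n, a n * x ^ n = ∑ i : Fin m, (∑' n, a (m * n + i) * (x ^ m) ^ n) * x ^ (i : ℕ) := by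
  have hs : Summable fun p =>
      a ((Nat.divModEquiv m).symm p) * x ^ (Nat.divModEquiv m).symm p :=
    h.comp_injective (Nat.divModEquiv m).symm.injective
  have hs' (i : Fin m) : Summable fun n =>
      a ((Nat.divModEquiv m).symm (n, i)) * x ^ (Nat.divModEquiv m).symm (n, i) :=
    hs.comp_injective (Prod.mk_left_injective i)
  have hterm (n : ℕ) (i : Fin m) :
      a ((Nat.divModEquiv m).symm (n, i)) * x ^ (Nat.divModEquiv m).symm (n, i) =
        a (m * n + i) * (x ^ m) ^ n * x ^ (i : ℕ) := by
    rw [Nat.divModEquiv_symm_apply, mul_comm n m, pow_add, pow_mul, mul_assoc]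
  rw [← (Nat.divModEquiv m).symm.tsum_eq, hs.tsum_prod]
  simp only [tsum_fintype]
  rw [Summable.tsum_finsetSum fun i _ => hs' i]
  simp only [hterm, tsum_mul_right]

lemma eq_of_sum_mul_pow_eq_of_isPrimitiveRoot {K : Type*} [Field K] {ζ x : K} {m : ℕ}
    (hζ : IsPrimitiveRoot ζ m) (hx : x ≠ 0) {a b : Fin m → K}
    (h : ∀ y, y ^ m = x ^ m → ∑ i, a i * y ^ (i : ℕ) = ∑ i, b i * y ^ (i : ℕ)) : a = b := by
  have hinj : Function.Injective fun j : Fin m => ζ ^ (j : ℕ) * x := fun i j hij =>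
    Fin.ext (hζ.pow_inj i.2 j.2 (mul_right_cancel₀ hx hij))
  refine sub_eq_zero.1 (Matrix.eq_zero_of_forall_index_sum_mul_pow_eq_zero hinj fun j => ?_)
  have hj : (ζ ^ (j : ℕ) * x) ^ m = x ^ m := by
    rw [mul_pow, pow_right_comm, hζ.pow_eq_one, one_pow, one_mul]
  simp only [Pi.sub_apply, sub_mul, sum_sub_distrib, h _ hj, sub_self]

variable {q : ℂ}

lemma sum_tsum_PD_mul_pow {x : ℂ} (hx₀ : x ≠ 0) (hx : ‖x‖ < 1) (hxq : x ^ 3 = q) :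
    ∑ i : Fin 3, (∑' n, (PD (3 * n + i) : ℂ) * q ^ n) * x ^ (i : ℕ) =
      eulerFun (q ^ 3) ^ 9 / (eulerFun q ^ 7 * eulerFun (q ^ 2) * eulerFun (q ^ 6) ^ 3) *
        ((1 + 2 * (x * cubicContFrac q) + 4 * (x * cubicContFrac q) ^ 2) *
          (1 - x * cubicContFrac q + (x * cubicContFrac q) ^ 2)) := by
  have split := tsum_mul_pow_eq_sum_tsum (summable_norm_PD_mul_pow hx).of_norm 3
  have inv := inv_eulerFun_mul_eulerFun_sq hx₀ hx
  have h₆ : x ^ 6 = q ^ 2 := by rw [← hxq]; ring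
  have h₉ : x ^ 9 = q ^ 3 := by rw [← hxq]; ring
  have h₁₈ : x ^ 18 = q ^ 6 := by rw [← hxq]; ring
  rw [hxq] at split
  rw [hxq, h₆, h₉, h₁₈] at inv
  have hq : ‖q‖ < 1 := hxq ▸ norm_pow_lt_one hx three_ne_zero
  have hE := eulerFun_ne_zero hq
  have hE₂ := eulerFun_pow_ne_zero hq two_ne_zero
  rw [← split, tsum_PD_mul_pow hx, hxq, h₆, div_eq_mul_inv, mul_inv, inv]
  field_simp

theorem tsum_PD_three_mul_add_one_mul_pow (hq₀ : q ≠ 0) (hq : ‖q‖ < 1) :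
    ∑' n, (PD (3 * n + 1) : ℂ) * q ^ n =
      eulerFun (q ^ 3) ^ 9 / (eulerFun q ^ 7 * eulerFun (q ^ 2) * eulerFun (q ^ 6) ^ 3) *
        (cubicContFrac q + 4 * q * cubicContFrac q ^ 4) := by
  set c := cubicContFrac q with hc
  set D := eulerFun (q ^ 3) ^ 9 / (eulerFun q ^ 7 * eulerFun (q ^ 2) * eulerFun (q ^ 6) ^ 3) with hD
  obtain ⟨x, hxq⟩ := IsAlgClosed.exists_pow_nat_eq q three_pos
  have hx₀ : x ≠ 0 := fun h => hq₀ (by simp [← hxq, h])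
  have hdissection : (fun i : Fin 3 => ∑' n, (PD (3 * n + i) : ℂ) * q ^ n) =
      ![D * (1 - 2 * q * c ^ 3), D * (c + 4 * q * c ^ 4), D * (3 * c ^ 2)] := by
    refine eq_of_sum_mul_pow_eq_of_isPrimitiveRoot (Complex.isPrimitiveRoot_exp 3 three_ne_zero) hx₀
      fun y hy => ?_
    rw [hxq] at hy
    have hy₀ : y ≠ 0 := fun h => hq₀ (by simp [← hy, h])
    have hy₁ : ‖y‖ < 1 := by
      rw [← hy, norm_pow] at hq
      exact (pow_lt_one_iff_of_nonneg (norm_nonneg y) three_ne_zero).1 hq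
    rw [sum_tsum_PD_mul_pow hy₀ hy₁ hy, ← hc, ← hD, Fin.sum_univ_three]
    simp only [← hy, Matrix.cons_val, Fin.val_zero, Fin.val_one, Fin.val_two]
    ring
  exact congrFun hdissection 1

end Extraction

theorem generating_function_PD_three_n_add_one (q : ℂ) (hq : ‖q‖ < 1) :
    ∑' n : ℕ, (PD (3 * n + 1) : ℂ) * q ^ n =
      qPoch (q ^ 3) (q ^ 6) ^ 3 * qPoch (q ^ 6) (q ^ 6) ^ 6 /
          (qPoch q (q ^ 2) ^ 5 * qPoch (q ^ 2) (q ^ 2) ^ 8) *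
        (4 * q * qPoch q (q ^ 2) ^ 2 / qPoch (q ^ 3) (q ^ 6) ^ 6 +
          qPoch (q ^ 3) (q ^ 6) ^ 3 / qPoch q (q ^ 2)) := by
  obtain rfl | hq₀ := eq_or_ne q 0
  · rw [tsum_eq_single 0 fun n hn => by simp [hn]]
    simp [PD_one, qPoch]
  have hq₃ := norm_pow_lt_one hq three_ne_zero
  have hE₂ := eulerFun_pow_ne_zero hq two_ne_zero
  have hE₆ := eulerFun_pow_ne_zero hq (n := 6) (by norm_num)
  have hA : qPoch q (q ^ 2) ≠ 0 := qPoch_ne_zero hq (norm_pow_lt_one hq two_ne_zero)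
  have hB : qPoch (q ^ 3) (q ^ 6) ≠ 0 := qPoch_ne_zero hq₃ (norm_pow_lt_one hq (by norm_num))
  have hE : qPoch q (q ^ 2) * eulerFun (q ^ 2) = eulerFun q := qPoch_sq_mul_eulerFun_sq hq
  have hE₃ : qPoch (q ^ 3) (q ^ 6) * eulerFun (q ^ 6) = eulerFun (q ^ 3) := by
    simpa only [← pow_mul] using qPoch_sq_mul_eulerFun_sq hq₃
  rw [tsum_PD_three_mul_add_one_mul_pow hq₀ hq, ← hE, ← hE₃, cubicContFrac, ← eulerFun,
    ← eulerFun]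
  field_simp
  ring
end

section
/- The function G(q) = (∑_{n=0}^∞ PD(3n) q^n) · (q; q^6)_∞^5 (q^3; q^6)_∞^2 (q^5; q^6)_∞^5, defined for complex q with |q| < 1, is an even function of q; that is, G(q) = G(−q) for all |q| < 1. (Equivalently, the generating function of PD(3n) equals 1/((q; q^6)_∞^5 (q^3; q^6)_∞^2 (q^5; q^6)_∞^5) times a power series in q^2.) -/
open Finset

/-- `G(q) = (∑_{n≥0} PD(3n) qⁿ) · (q; q⁶)_∞⁵ (q³; q⁶)_∞² (q⁵; q⁶)_∞⁵`. -/
noncomputable def G (q : ℂ) : ℂ :=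
  (∑' n : ℕ, (PD (3 * n) : ℂ) * q ^ n) *
    (qPoch q (q ^ 6) ^ 5 * qPoch (q ^ 3) (q ^ 6) ^ 2 * qPoch (q ^ 5) (q ^ 6) ^ 5)

/-
With `E(q) = (q; q)_∞` and `c(q) = E(q³)³ / E(q)`, the Euler product of `∑ PD(n) qⁿ` is
`E(q⁶) / (E(q) E(q²) E(q³))`. Dissecting `E(t) E(t²)` modulo `3` and averaging over the cube roots
`t` of `q` gives `∑ PD(3n) qⁿ`, hence `G(q) = (c(q)² - 2q c(q²)³ / c(q)) / E(q²)⁶`. The identities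
`c(q) c(-q) c(q⁴) = c(q²)³` and `c(q) - c(-q) = 2q c(q⁴)` turn this into
`G(q) = (c(q)² - c(q) c(-q) + c(-q)²) / E(q²)⁶`, which is symmetric under `q ↦ -q`.
-/

namespace QSeries

open Filter Topology

section QPochhammer

variable {a q : ℂ}

lemma norm_pow_lt_one_iff {k : ℕ} [NeZero k] : ‖q ^ k‖ < 1 ↔ ‖q‖ < 1 := by
  rw [norm_pow, pow_lt_one_iff_of_nonneg (norm_nonneg q) (NeZero.ne k)]

lemma norm_pow_lt_one (hq : ‖q‖ < 1) (k : ℕ) [NeZero k] : ‖q ^ k‖ < 1 :=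
  norm_pow_lt_one_iff.2 hq

lemma summable_norm_mul_pow (hq : ‖q‖ < 1) (a : ℂ) : Summable fun n : ℕ => ‖a * q ^ n‖ := by
  simpa using (summable_geometric_of_lt_one (norm_nonneg q) hq).mul_left ‖a‖

lemma multipliable_qPoch (hq : ‖q‖ < 1) (a : ℂ) : Multipliable fun n : ℕ => 1 - a * q ^ n := by
  simpa [sub_eq_add_neg] using multipliable_one_add_of_summable
    (f := fun n : ℕ => -(a * q ^ n)) (by simpa using summable_norm_mul_pow hq a)

lemma tendsto_qPoch (hq : ‖q‖ < 1) (a : ℂ) :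
    Tendsto (fun N : ℕ => ∏ n ∈ range N, (1 - a * q ^ n)) atTop (𝓝 (qPoch a q)) :=
  (multipliable_qPoch hq a).hasProd.tendsto_prod_nat

lemma one_sub_mul_pow_ne_zero (hq : ‖q‖ < 1) (ha : ‖a‖ < 1) (n : ℕ) : 1 - a * q ^ n ≠ 0 := by
  refine sub_ne_zero.2 fun h => ?_
  have hlt : ‖a * q ^ n‖ < 1 := by
    rw [norm_mul, norm_pow]
    exact mul_lt_one_of_nonneg_of_lt_one_left (norm_nonneg a) ha
      (pow_le_one₀ (norm_nonneg q) hq.le)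
  simp [← h] at hlt

lemma qPoch_ne_zero (hq : ‖q‖ < 1) (ha : ‖a‖ < 1) : qPoch a q ≠ 0 := by
  have h := tprod_one_add_ne_zero_of_summable (f := fun n : ℕ => -(a * q ^ n))
    (fun n => by simpa [sub_eq_add_neg] using one_sub_mul_pow_ne_zero hq ha n)
    (by simpa using summable_norm_mul_pow hq a)
  simpa [qPoch, sub_eq_add_neg] using h

lemma qPoch_eq_one_sub_mul_qPoch (hq : ‖q‖ < 1) (a : ℂ) :
    qPoch a q = (1 - a) * qPoch (a * q) q := by
  have h := tprod_eq_zero_mul' (f := fun n : ℕ => 1 - a * q ^ n)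
    (by simpa [pow_succ', mul_assoc] using multipliable_qPoch hq (a * q))
  simpa [qPoch, pow_succ', mul_assoc] using h

lemma qPoch_eq_prod_qPoch_pow (hq : ‖q‖ < 1) (a : ℂ) (d : ℕ) [NeZero d] :
    qPoch a q = ∏ j ∈ range d, qPoch (a * q ^ j) (q ^ d) := by
  have h_left := (tendsto_qPoch hq a).comp (tendsto_id.nsmul_atTop (NeZero.pos d))
  have h_right := tendsto_finsetProd (range d)
    fun j _ => tendsto_qPoch (norm_pow_lt_one hq d) (a * q ^ j)
  refine tendsto_nhds_unique h_left (h_right.congr fun N => ?_)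
  simp only [Function.comp_apply, id, smul_eq_mul]
  rw [Finset.prod_comm]
  induction N with
  | zero => simp
  | succ N ih =>
    rw [prod_range_succ, ih, Nat.mul_succ, prod_range_add]
    refine congrArg _ (prod_congr rfl fun j _ => ?_)
    rw [pow_add, pow_mul, mul_assoc, mul_comm (q ^ j)]

lemma isPrimitiveRoot_pow_mul_pow {M : Type*} [CommMonoid M] {ω : M} {n : ℕ}
    (hω : IsPrimitiveRoot ω n) (j : ℕ) (x : M) : (ω ^ j * x) ^ n = x ^ n := by
  rw [mul_pow, pow_right_comm, hω.pow_eq_one, one_pow, one_mul]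

lemma prod_one_sub_pow_mul_eq_one_sub_pow {R : Type*} [CommRing R] [IsDomain R] {ω : R} {n : ℕ}
    (hω : IsPrimitiveRoot ω n) (hn : 0 < n) (x : R) :
    ∏ i ∈ range n, (1 - ω ^ i * x) = 1 - x ^ n := by
  simpa [Polynomial.eval_prod] using
    (congrArg (Polynomial.eval 1) (X_pow_sub_C_eq_prod hω hn (rfl : x ^ n = x ^ n))).symm

lemma prod_qPoch_pow_mul (hq : ‖q‖ < 1) (a : ℂ) {ω : ℂ} {n : ℕ} (hω : IsPrimitiveRoot ω n)
    (hn : 0 < n) : ∏ i ∈ range n, qPoch (ω ^ i * a) q = qPoch (a ^ n) (q ^ n) := by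
  have h_mul : ∀ i ∈ range n, Multipliable fun k : ℕ => 1 - ω ^ i * a * q ^ k :=
    fun i _ => multipliable_qPoch hq (ω ^ i * a)
  calc ∏ i ∈ range n, qPoch (ω ^ i * a) q
      = ∏' k : ℕ, ∏ i ∈ range n, (1 - ω ^ i * a * q ^ k) :=
        (Multipliable.tprod_finsetProd h_mul).symm
    _ = ∏' k : ℕ, (1 - a ^ n * (q ^ n) ^ k) := tprod_congr fun k => by
        simp only [mul_assoc, prod_one_sub_pow_mul_eq_one_sub_pow hω hn]
        rw [mul_pow, pow_right_comm]

lemma qPoch_mul_qPoch_neg (hq : ‖q‖ < 1) (a : ℂ) :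
    qPoch a q * qPoch (-a) q = qPoch (a ^ 2) (q ^ 2) := by
  simpa [prod_range_succ] using
    prod_qPoch_pow_mul hq a (IsPrimitiveRoot.neg_one 0 (by decide)) two_pos

end QPochhammer

/-- Euler's function `E(q) = (q; q)_∞`. -/
noncomputable def eulerFun (q : ℂ) : ℂ := qPoch q q

local notation "E" => eulerFun

section EulerFunction

variable {q : ℂ}

lemma eulerFun_ne_zero (hq : ‖q‖ < 1) : E q ≠ 0 := qPoch_ne_zero hq hq

lemma eulerFun_pow_ne_zero (hq : ‖q‖ < 1) (k : ℕ) [NeZero k] : E (q ^ k) ≠ 0 :=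
  eulerFun_ne_zero (norm_pow_lt_one hq k)

lemma qPoch_sq_mul_eulerFun (hq : ‖q‖ < 1) : qPoch q (q ^ 2) * E (q ^ 2) = E q := by
  rw [eulerFun, eulerFun, qPoch_eq_prod_qPoch_pow hq q 2]
  simp [prod_range_succ, ← pow_two]

lemma qPoch_neg_mul_eulerFun (hq : ‖q‖ < 1) : qPoch (-q) q * E q = E (q ^ 2) := by
  rw [eulerFun, eulerFun, mul_comm, qPoch_mul_qPoch_neg hq]

lemma qPoch_mul_qPoch_six (hq : ‖q‖ < 1) :
    qPoch q (q ^ 6) * qPoch (q ^ 5) (q ^ 6) = E q * E (q ^ 6) / (E (q ^ 2) * E (q ^ 3)) := by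
  have h_two := qPoch_sq_mul_eulerFun hq
  have h_six := qPoch_sq_mul_eulerFun (norm_pow_lt_one hq 3)
  have h_split := qPoch_eq_prod_qPoch_pow (norm_pow_lt_one hq 2) q 3
  simp only [prod_range_succ, range_zero, prod_empty, one_mul, ← pow_mul, ← pow_succ',
    mul_zero, mul_one] at h_split
  rw [← pow_mul] at h_six
  rw [eq_div_iff (mul_ne_zero (eulerFun_pow_ne_zero hq 2) (eulerFun_pow_ne_zero hq 3)),
    ← h_two, h_split, ← h_six]
  ring_nf

lemma eulerFun_eq_prod_qPoch_pow (hq : ‖q‖ < 1) (d : ℕ) [NeZero d] :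
    E q = ∏ i ∈ range d, qPoch (q ^ (i + 1)) (q ^ d) := by
  rw [eulerFun, qPoch_eq_prod_qPoch_pow hq q d]
  exact prod_congr rfl fun i _ => by rw [pow_succ']

/- Splitting each `E(ωʲ q)` modulo `p`, the factors with exponent prime to `p` combine through
the roots of unity, while those with exponent divisible by `p` each give `E(q^p)`. -/
lemma prod_eulerFun_pow_mul (hq : ‖q‖ < 1) {ω : ℂ} {p : ℕ} (hp : p.Prime)
    (hω : IsPrimitiveRoot ω p) :
    (∏ j ∈ range p, E (ω ^ j * q)) * E (q ^ p ^ 2) = E (q ^ p) ^ (p + 1) := by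
  have : NeZero p := ⟨hp.ne_zero⟩
  obtain ⟨m, hm⟩ : ∃ m, p = m + 1 := Nat.exists_eq_add_one.2 hp.pos
  have h_norm (j : ℕ) : ‖ω ^ j * q‖ < 1 := by simpa [hω.norm'_eq_one hp.ne_zero] using hq
  have h_factor (j : ℕ) :
      E (ω ^ j * q) = ∏ i ∈ range p, qPoch ((ω ^ (i + 1)) ^ j * q ^ (i + 1)) (q ^ p) := by
    rw [eulerFun_eq_prod_qPoch_pow (h_norm j) p, isPrimitiveRoot_pow_mul_pow hω]
    exact prod_congr rfl fun i _ => by rw [mul_pow, pow_right_comm]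
  have h_coprime : ∀ i ∈ range m, ∏ j ∈ range p,
      qPoch ((ω ^ (i + 1)) ^ j * q ^ (i + 1)) (q ^ p) = qPoch ((q ^ p) ^ (i + 1)) (q ^ p ^ 2) := by
    intro i hi
    have hi : i + 1 < p := by have := mem_range.1 hi; omega
    have hω' := hω.pow_of_coprime (i + 1) (Nat.coprime_of_lt_prime i.succ_ne_zero hi hp).symm
    rw [prod_qPoch_pow_mul (norm_pow_lt_one hq p) _ hω' hp.pos, pow_right_comm, ← pow_mul q p p,
      ← pow_two]
  have h_dvd : ∏ j ∈ range p, qPoch ((ω ^ (m + 1)) ^ j * q ^ (m + 1)) (q ^ p) = E (q ^ p) ^ p := by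
    simp [← hm, hω.pow_eq_one, eulerFun]
  have h_euler : (∏ i ∈ range m, qPoch ((q ^ p) ^ (i + 1)) (q ^ p ^ 2)) * E (q ^ p ^ 2) =
      E (q ^ p) := by
    rw [eulerFun_eq_prod_qPoch_pow (norm_pow_lt_one hq p) p, ← pow_mul, ← pow_two]
    conv_rhs => rw [hm, prod_range_succ, ← hm, ← pow_mul, ← pow_two]
    rfl
  calc (∏ j ∈ range p, E (ω ^ j * q)) * E (q ^ p ^ 2)
      = (∏ i ∈ range m, qPoch ((q ^ p) ^ (i + 1)) (q ^ p ^ 2)) * E (q ^ p) ^ p * E (q ^ p ^ 2) := by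
        rw [prod_congr rfl fun j _ => h_factor j, Finset.prod_comm, ← prod_congr rfl h_coprime,
          ← h_dvd, ← prod_range_succ, ← hm]
    _ = E (q ^ p) ^ (p + 1) := by rw [mul_right_comm, h_euler, pow_succ']

lemma eulerFun_neg_mul_eulerFun (hq : ‖q‖ < 1) :
    E q * E (-q) * E (q ^ 4) = E (q ^ 2) ^ 3 := by
  simpa [prod_range_succ] using
    prod_eulerFun_pow_mul hq Nat.prime_two (IsPrimitiveRoot.neg_one 0 (by decide))

end EulerFunction

section GaussianBinomial

/-- The Gaussian binomial coefficient `[n choose k]_p`, defined by its `p`-Pascal recurrence. -/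
def gaussBinom {R : Type*} [CommSemiring R] (p : R) : ℕ → ℕ → R
  | _, 0 => 1
  | 0, _ + 1 => 0
  | n + 1, k + 1 => gaussBinom p n k + p ^ (k + 1) * gaussBinom p n (k + 1)

section CommSemiring

variable {R : Type*} [CommSemiring R] (p : R)

lemma gaussBinom_zero_right (n : ℕ) : gaussBinom p n 0 = 1 := by cases n <;> rfl

lemma gaussBinom_eq_zero_of_lt {n k : ℕ} (h : n < k) : gaussBinom p n k = 0 := by
  induction n generalizing k with
  | zero => obtain ⟨k, rfl⟩ := Nat.exists_eq_add_of_lt h; simp [gaussBinom]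
  | succ n ih =>
    obtain ⟨k, rfl⟩ : ∃ j, k = j + 1 := ⟨k - 1, by omega⟩
    simp [gaussBinom, ih (show n < k by omega), ih (show n < k + 1 by omega)]

theorem prod_one_add_mul_pow_eq_sum_gaussBinom (n : ℕ) (x : R) :
    ∏ k ∈ range n, (1 + x * p ^ k) =
      ∑ j ∈ range (n + 1), gaussBinom p n j * p ^ j.choose 2 * x ^ j := by
  induction n generalizing x with
  | zero => simp [gaussBinom]
  | succ n ih =>
    have h_shift : ∏ k ∈ range n, (1 + x * p ^ (k + 1)) = ∏ k ∈ range n, (1 + x * p * p ^ k) :=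
      prod_congr rfl fun k _ => by ring
    have h_top : ∑ j ∈ range (n + 1), gaussBinom p n j * p ^ j.choose 2 * (x * p) ^ j =
        ∑ j ∈ range (n + 1), gaussBinom p n (j + 1) * p ^ (j + 1).choose 2 * (x * p) ^ (j + 1)
          + 1 := by
      have h := sum_range_succ' (fun j => gaussBinom p n j * p ^ j.choose 2 * (x * p) ^ j) (n + 1)
      rw [sum_range_succ, gaussBinom_eq_zero_of_lt p n.lt_succ_self] at h
      simpa [gaussBinom_zero_right] using h
    have h_pascal (j : ℕ) :
        gaussBinom p (n + 1) (j + 1) * p ^ (j + 1).choose 2 * x ^ (j + 1) =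
          x * (gaussBinom p n j * p ^ j.choose 2 * (x * p) ^ j) +
            gaussBinom p n (j + 1) * p ^ (j + 1).choose 2 * (x * p) ^ (j + 1) := by
      rw [Nat.choose_succ_succ' j 1, Nat.choose_one_right, gaussBinom]
      ring
    rw [prod_range_succ', h_shift, ih, sum_range_succ' _ (n + 1),
      sum_congr rfl fun j _ => h_pascal j, sum_add_distrib, ← mul_sum, add_assoc]
    simp only [gaussBinom_zero_right, Nat.choose_zero_succ, pow_zero, mul_one]
    rw [← h_top]
    ring

end CommSemiring

theorem gaussBinom_mul_prod_mul_prod {R : Type*} [CommRing R] (p : R) (a b : ℕ) :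
    gaussBinom p (a + b) a * (∏ i ∈ range a, (1 - p ^ (i + 1))) * ∏ i ∈ range b, (1 - p ^ (i + 1))
      = ∏ i ∈ range (a + b), (1 - p ^ (i + 1)) := by
  induction a generalizing b with
  | zero => simp [gaussBinom_zero_right]
  | succ a ih_a =>
    induction b with
    | zero =>
      have h := ih_a 0
      simp only [add_zero, range_zero, prod_empty, mul_one] at h
      simp only [add_zero, gaussBinom, gaussBinom_eq_zero_of_lt p a.lt_succ_self, prod_range_succ,
        range_zero, prod_empty]
      linear_combination (1 - p ^ (a + 1)) * h
    | succ b ih_b =>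
      have h := ih_a (b + 1)
      rw [show a + (b + 1) = a + 1 + b by ring] at h
      rw [← add_assoc, gaussBinom, prod_range_succ _ (a + 1 + b)]
      rw [prod_range_succ _ a] at ih_b ⊢
      rw [prod_range_succ _ b] at h ⊢
      linear_combination (1 - p ^ (a + 1)) * h + p ^ (a + 1) * (1 - p ^ (b + 1)) * ih_b

end GaussianBinomial

section FiniteTripleProduct

variable {K : Type*} [Field K] {q z : K}

lemma prod_one_add_zpow_mul_pow (hq : q ≠ 0) (hz : z ≠ 0) (n : ℕ) :
    ∏ k ∈ range n, (1 + z * q ^ (1 - 2 * n : ℤ) * (q ^ 2) ^ k) =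
      z ^ n * q ^ (-n ^ 2 : ℤ) * ∏ k ∈ range n, (1 + q / z * (q ^ 2) ^ k) := by
  induction n with
  | zero => simp
  | succ n ih =>
    have h_shift (k : ℕ) : 1 + z * q ^ (1 - 2 * (n + 1 : ℕ) : ℤ) * (q ^ 2) ^ (k + 1) =
        1 + z * q ^ (1 - 2 * n : ℤ) * (q ^ 2) ^ k := by
      rw [show (1 - 2 * n : ℤ) = (1 - 2 * (n + 1 : ℕ)) + (2 : ℕ) by push_cast; ring,
        zpow_add₀ hq, zpow_natCast]
      ring
    have h_first : z * q ^ (1 - 2 * (n + 1 : ℕ) : ℤ) * (q / z * (q ^ 2) ^ n) = 1 := by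
      rw [← pow_mul, show (1 - 2 * (n + 1 : ℕ) : ℤ) = -((2 * n + 1 : ℕ) : ℤ) by push_cast; ring,
        zpow_neg, zpow_natCast]
      field_simp
      ring
    have h_sq : (-(n + 1 : ℕ) ^ 2 : ℤ) = -n ^ 2 + (1 - 2 * (n + 1 : ℕ)) := by push_cast; ring
    rw [prod_range_succ', prod_range_succ, prod_congr rfl fun k _ => h_shift k, ih, h_sq,
      zpow_add₀ hq]
    linear_combination (-(z ^ n * q ^ (-n ^ 2 : ℤ)) *
      ∏ k ∈ range n, (1 + q / z * (q ^ 2) ^ k)) * h_first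

lemma pow_choose_two_mul_pow (hq : q ≠ 0) (hz : z ≠ 0) (n k : ℕ) :
    (q ^ 2) ^ k.choose 2 * (z * q ^ (1 - 2 * n : ℤ)) ^ k =
      z ^ n * q ^ (-n ^ 2 : ℤ) * (q ^ ((k - n : ℤ) ^ 2) * z ^ (k - n : ℤ)) := by
  have h_choose : (2 * k.choose 2 : ℤ) = k * (k - 1) := by
    have h : (2 * k.choose 2 : ℚ) = k * (k - 1) := by rw [Nat.cast_choose_two]; ring
    exact_mod_cast h
  have h_q : (q ^ 2) ^ k.choose 2 * (q ^ (1 - 2 * n : ℤ)) ^ k =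
      q ^ (-n ^ 2 : ℤ) * q ^ ((k - n : ℤ) ^ 2) := by
    rw [← pow_mul, ← zpow_natCast, ← zpow_natCast (q ^ _) k, ← zpow_mul, ← zpow_add₀ hq,
      ← zpow_add₀ hq]
    push_cast
    rw [h_choose]
    ring_nf
  rw [mul_pow, zpow_sub₀ hz, zpow_natCast, zpow_natCast]
  field_simp
  linear_combination h_q

theorem prod_mul_prod_eq_sum_gaussBinom (hq : q ≠ 0) (hz : z ≠ 0) (n : ℕ) :
    (∏ k ∈ range n, (1 + z * q * (q ^ 2) ^ k)) * ∏ k ∈ range n, (1 + q / z * (q ^ 2) ^ k) =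
      ∑ k ∈ range (2 * n + 1),
        gaussBinom (q ^ 2) (2 * n) k * (q ^ ((k - n : ℤ) ^ 2) * z ^ (k - n : ℤ)) := by
  have h_unit : z ^ n * q ^ (-n ^ 2 : ℤ) ≠ 0 := by positivity
  have h_upper (k : ℕ) :
      1 + z * q ^ (1 - 2 * n : ℤ) * (q ^ 2) ^ (n + k) = 1 + z * q * (q ^ 2) ^ k := by
    rw [pow_add, ← pow_mul q 2 n, ← zpow_natCast q (2 * n), mul_assoc z, ← mul_assoc (q ^ _),
      ← zpow_add₀ hq]
    simp [mul_assoc]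
  have h_binom := prod_one_add_mul_pow_eq_sum_gaussBinom (q ^ 2) (2 * n) (z * q ^ (1 - 2 * n : ℤ))
  rw [two_mul n, prod_range_add, ← two_mul, prod_one_add_zpow_mul_pow hq hz,
    prod_congr rfl fun k _ => h_upper k] at h_binom
  refine mul_left_cancel₀ h_unit ?_
  rw [mul_comm (∏ _ ∈ _, _), ← mul_assoc, h_binom, mul_sum]
  refine sum_congr rfl fun k _ => ?_
  rw [mul_assoc, pow_choose_two_mul_pow hq hz, mul_left_comm]

end FiniteTripleProduct

section GaussianBinomialLimit

variable {p : ℂ}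

lemma tendsto_prod_one_sub_pow_succ (hp : ‖p‖ < 1) :
    Tendsto (fun n => ∏ i ∈ range n, (1 - p ^ (i + 1))) atTop (𝓝 (E p)) := by
  simpa only [eulerFun, pow_succ'] using tendsto_qPoch hp p

lemma gaussBinom_add_eq_div (hp : ‖p‖ < 1) (a b : ℕ) :
    gaussBinom p (a + b) a = (∏ i ∈ range (a + b), (1 - p ^ (i + 1))) /
      ((∏ i ∈ range a, (1 - p ^ (i + 1))) * ∏ i ∈ range b, (1 - p ^ (i + 1))) := by
  have h_ne (n : ℕ) : ∏ i ∈ range n, (1 - p ^ (i + 1)) ≠ 0 :=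
    prod_ne_zero_iff.2 fun i _ => by simpa [pow_succ'] using one_sub_mul_pow_ne_zero hp hp i
  rw [eq_div_iff (mul_ne_zero (h_ne a) (h_ne b)), ← mul_assoc, gaussBinom_mul_prod_mul_prod]

lemma tendsto_gaussBinom (hp : ‖p‖ < 1) :
    Tendsto (fun ab : ℕ × ℕ => gaussBinom p (ab.1 + ab.2) ab.1) (atTop ×ˢ atTop)
      (𝓝 (E p)⁻¹) := by
  have h := tendsto_prod_one_sub_pow_succ hp
  have h_ne := eulerFun_ne_zero hp
  have h_add : Tendsto (fun ab : ℕ × ℕ => ab.1 + ab.2) (atTop ×ˢ atTop) atTop :=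
    tendsto_fst.atTop_add_atTop tendsto_snd
  have h_div := (h.comp h_add).div ((h.comp tendsto_fst).mul (h.comp tendsto_snd))
    (mul_ne_zero h_ne h_ne)
  rw [div_mul_cancel_left₀ h_ne] at h_div
  exact h_div.congr fun ab => (gaussBinom_add_eq_div hp ab.1 ab.2).symm

lemma exists_norm_gaussBinom_le (hp : ‖p‖ < 1) : ∃ C, ∀ n k, ‖gaussBinom p n k‖ ≤ C := by
  have h := tendsto_prod_one_sub_pow_succ hp
  obtain ⟨A, hA⟩ := (Metric.isBounded_range_of_tendsto _ h).exists_norm_le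
  obtain ⟨B, hB⟩ := (Metric.isBounded_range_of_tendsto _
    (h.inv₀ (eulerFun_ne_zero hp))).exists_norm_le
  replace hA (n : ℕ) : ‖∏ i ∈ range n, (1 - p ^ (i + 1))‖ ≤ A := hA _ ⟨n, rfl⟩
  replace hB (n : ℕ) : ‖(∏ i ∈ range n, (1 - p ^ (i + 1)))⁻¹‖ ≤ B := hB _ ⟨n, rfl⟩
  have hA₀ : 0 ≤ A := (norm_nonneg _).trans (hA 0)
  have hB₀ : 0 ≤ B := (norm_nonneg _).trans (hB 0)
  refine ⟨A * (B * B), fun n k => ?_⟩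
  rcases lt_or_ge n k with hnk | hkn
  · rw [gaussBinom_eq_zero_of_lt p hnk, norm_zero]
    positivity
  · obtain ⟨b, rfl⟩ := Nat.exists_eq_add_of_le hkn
    rw [gaussBinom_add_eq_div hp, div_eq_mul_inv, mul_inv, norm_mul, norm_mul]
    gcongr
    exacts [hA _, hB _, hB _]

end GaussianBinomialLimit

/-- The central Gaussian binomial coefficient `[2n choose n + j]_p`, indexed by its offset `j` from
the middle and extended by zero to all integers `j`. -/
def centralGaussBinom {R : Type*} [CommSemiring R] (p : R) (n : ℕ) (j : ℤ) : R :=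
  if 0 ≤ n + j then gaussBinom p (2 * n) (n + j).toNat else 0

section CentralGaussianBinomial

variable {p : ℂ}

lemma exists_norm_centralGaussBinom_le (hp : ‖p‖ < 1) :
    ∃ C, ∀ n j, ‖centralGaussBinom p n j‖ ≤ C := by
  obtain ⟨C, hC⟩ := exists_norm_gaussBinom_le hp
  refine ⟨C, fun n j => ?_⟩
  rw [centralGaussBinom]
  split_ifs
  · exact hC _ _
  · exact norm_zero.trans_le ((norm_nonneg _).trans (hC 0 0))

lemma tendsto_centralGaussBinom (hp : ‖p‖ < 1) (j : ℤ) :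
    Tendsto (centralGaussBinom p · j) atTop (𝓝 (E p)⁻¹) := by
  have h_toNat (i : ℤ) : Tendsto (fun n : ℕ => (n + i).toNat) atTop atTop :=
    tendsto_atTop.2 fun b => by
      filter_upwards [eventually_ge_atTop (b + i.natAbs)] with n hn
      omega
  refine ((tendsto_gaussBinom hp).comp ((h_toNat j).prodMk (h_toNat (-j)))).congr' ?_
  filter_upwards [eventually_ge_atTop j.natAbs] with n hn
  rw [centralGaussBinom, if_pos (by omega)]
  simp only [Function.comp_apply]
  congr 1
  omega

lemma hasSum_centralGaussBinom {K : Type*} [Field K] [TopologicalSpace K] {q z : K} (hq : q ≠ 0)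
    (hz : z ≠ 0) (n : ℕ) :
    HasSum (fun j : ℤ => centralGaussBinom (q ^ 2) n j * (q ^ (j ^ 2) * z ^ j))
      ((∏ k ∈ range n, (1 + z * q * (q ^ 2) ^ k)) * ∏ k ∈ range n, (1 + q / z * (q ^ 2) ^ k)) := by
  have h_inj : Function.Injective fun k : ℕ => (k : ℤ) - n := fun a b h => by simpa using h
  rw [prod_mul_prod_eq_sum_gaussBinom hq hz, ← h_inj.hasSum_iff fun j hj => ?_]
  · have h_term (k : ℕ) : centralGaussBinom (q ^ 2) n (k - n) = gaussBinom (q ^ 2) (2 * n) k := by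
      simp [centralGaussBinom]
    simp only [Function.comp_def, h_term]
    refine hasSum_sum_of_ne_finset_zero fun k hk => ?_
    rw [gaussBinom_eq_zero_of_lt _ (by simpa using hk), zero_mul]
  · have h_neg : ¬ 0 ≤ n + j := fun h => hj ⟨(n + j).toNat, by simp only; omega⟩
    rw [centralGaussBinom, if_neg h_neg, zero_mul]

end CentralGaussianBinomial

/-- Jacobi's theta function `θ(q, z) = ∑_{n ∈ ℤ} q^(n²) zⁿ`. -/
noncomputable def theta (q z : ℂ) : ℂ := ∑' n : ℤ, q ^ (n ^ 2) * z ^ n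

section Theta

variable {q z : ℂ}

lemma summable_theta (hq : ‖q‖ < 1) (hq₀ : q ≠ 0) (hz : z ≠ 0) :
    Summable fun n : ℤ => q ^ (n ^ 2) * z ^ n := by
  set τ := Complex.log q / (Real.pi * Complex.I)
  set w := Complex.log z / (2 * Real.pi * Complex.I)
  have h_pi : (Real.pi : ℂ) ≠ 0 := by exact_mod_cast Real.pi_ne_zero
  have h_im : 0 < τ.im := by
    have : τ.im = -(Real.log ‖q‖ / Real.pi) := by
      simp only [τ, Complex.div_im, Complex.log_re, Complex.mul_re, Complex.mul_im,
        Complex.ofReal_re, Complex.ofReal_im, Complex.I_re, Complex.I_im, map_mul,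
        Complex.normSq_ofReal, Complex.normSq_I, mul_zero, mul_one, sub_self, zero_div, add_zero,
        zero_sub, neg_inj]
      field_simp
    rw [this]
    exact neg_pos.2 (div_neg_of_neg_of_pos (Real.log_neg (norm_pos_iff.2 hq₀) hq) Real.pi_pos)
  refine ((summable_jacobiTheta₂_term_iff w τ).2 h_im).congr fun n => ?_
  rw [jacobiTheta₂_term, Complex.exp_add, mul_comm]
  congr 1
  · conv_rhs => rw [← Complex.exp_log hq₀, ← Complex.exp_int_mul]
    push_cast
    congr 1
    simp only [τ]
    field_simp [Complex.I_ne_zero]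
  · conv_rhs => rw [← Complex.exp_log hz, ← Complex.exp_int_mul]
    congr 1
    simp only [w]
    field_simp [Complex.I_ne_zero]

theorem jacobi_triple_product (hq : ‖q‖ < 1) (hq₀ : q ≠ 0) (hz : z ≠ 0) :
    theta q z = qPoch (-(z * q)) (q ^ 2) * qPoch (-(q / z)) (q ^ 2) * E (q ^ 2) := by
  have hq2 := norm_pow_lt_one hq 2
  obtain ⟨C, hC⟩ := exists_norm_centralGaussBinom_le hq2
  have h_series : Tendsto
      (fun n => ∑' j : ℤ, centralGaussBinom (q ^ 2) n j * (q ^ (j ^ 2) * z ^ j)) atTop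
      (𝓝 (∑' j : ℤ, (E (q ^ 2))⁻¹ * (q ^ (j ^ 2) * z ^ j))) :=
    tendsto_tsum_of_dominated_convergence ((summable_theta hq hq₀ hz).norm.mul_left C)
      (fun j => (tendsto_centralGaussBinom hq2 j).mul_const _)
      (.of_forall fun n j => by rw [norm_mul]; gcongr; exact hC n j)
  have h_prod := (tendsto_qPoch hq2 (-(z * q))).mul (tendsto_qPoch hq2 (-(q / z)))
  simp only [neg_mul, sub_neg_eq_add] at h_prod
  have h_eq := tendsto_nhds_unique h_series
    (h_prod.congr fun n => (hasSum_centralGaussBinom hq₀ hz n).tsum_eq.symm)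
  rw [tsum_mul_left, inv_mul_eq_iff_eq_mul₀ (eulerFun_ne_zero hq2)] at h_eq
  rw [theta, h_eq, mul_comm]

end Theta

section ResidueSums

variable {α : Type*} [AddCommGroup α] [UniformSpace α] [IsUniformAddGroup α] [CompleteSpace α]
  [T2Space α]

lemma tsum_int_eq_sum_tsum_residue {f : ℤ → α} (hf : Summable f) (k : ℕ) [NeZero k] :
    ∑' n, f n = ∑ r : Fin k, ∑' m, f (k * m + r) := by
  let e : Fin k × ℤ ≃ ℤ := (Equiv.prodComm _ _).trans (Int.divModEquiv k).symm
  calc ∑' n, f n = ∑' x, f (e x) := (e.tsum_eq f).symm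
    _ = ∑' r, ∑' m, f (e (r, m)) := (e.summable_iff.2 hf).tsum_prod
    _ = ∑ r : Fin k, ∑' m, f (k * m + r) := by
      simp [e, Int.divModEquiv, mul_comm]

lemma tsum_int_eq_tsum_three {f : ℤ → α} (hf : Summable f) :
    ∑' n, f n = ∑' m, f (3 * m) + ∑' m, f (3 * m + 1) + ∑' m, f (3 * m - 1) := by
  have h_shift : Summable fun n : ℤ => f (n - 1) := (Equiv.subRight (1 : ℤ)).summable_iff.2 hf
  have h := tsum_int_eq_sum_tsum_residue h_shift 3
  rw [Fin.sum_univ_three] at h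
  rw [← (Equiv.subRight (1 : ℤ)).tsum_eq f, ← add_rotate]
  simpa [add_sub_assoc] using h

end ResidueSums

section ThetaIdentities

variable {q z w : ℂ}

lemma theta_inv (q z : ℂ) : theta q z⁻¹ = theta q z := by
  rw [theta, ← (Equiv.neg ℤ).tsum_eq]
  simp [theta]

lemma theta_neg (q z : ℂ) : theta (-q) z = theta q (-z) := by
  refine tsum_congr fun n => ?_
  rcases Int.even_or_odd n with hn | hn
  · rw [(hn.pow_of_ne_zero two_ne_zero).neg_zpow, hn.neg_zpow]
  · rw [hn.pow.neg_zpow, hn.neg_zpow, neg_mul_comm]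

lemma theta_eq_add_three (hq : ‖q‖ < 1) (hq₀ : q ≠ 0) (hz : z ≠ 0) :
    theta q z = theta (q ^ 9) (z ^ 3) + q * z * theta (q ^ 9) (z ^ 3 * q ^ 6) +
      q / z * theta (q ^ 9) (z ^ 3 / q ^ 6) := by
  rw [theta, tsum_int_eq_tsum_three (summable_theta hq hq₀ hz)]
  simp only [theta, ← tsum_mul_left]
  congr 1
  · congr 1 <;> refine tsum_congr fun m => ?_
    · rw [mul_pow, zpow_mul q, zpow_mul z]
      norm_cast
    · rw [show (3 * m + 1) ^ 2 = 9 * m ^ 2 + 6 * m + 1 by ring, zpow_add₀ hq₀, zpow_add₀ hq₀,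
        zpow_add₀ hz, mul_zpow, zpow_mul q, zpow_mul q, zpow_mul z]
      simp only [zpow_ofNat]
      ring
  · refine tsum_congr fun m => ?_
    rw [show (3 * m - 1) ^ 2 = 9 * m ^ 2 - 6 * m + 1 by ring, zpow_add₀ hq₀, zpow_sub₀ hq₀,
      zpow_sub₀ hz, div_zpow, zpow_mul q, zpow_mul q, zpow_mul z]
    simp only [zpow_ofNat]
    ring

lemma isCompl_range_add_sub :
    IsCompl (Set.range fun x : ℤ × ℤ => (x.1 + x.2, x.1 - x.2))
      (Set.range fun x : ℤ × ℤ => (x.1 + x.2 - 1, x.1 - x.2)) := by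
  refine ⟨Set.disjoint_left.2 ?_, codisjoint_iff.2 (Set.eq_univ_of_forall fun ⟨m, n⟩ => ?_)⟩
  · rintro _ ⟨x, rfl⟩ ⟨y, h⟩
    simp only [Prod.mk.injEq] at h
    omega
  · rcases Int.even_or_odd (m + n) with ⟨k, hk⟩ | ⟨k, hk⟩
    · exact .inl ⟨(k, k - n), by ext <;> simp; omega⟩
    · exact .inr ⟨(k + 1, k + 1 - n), by ext <;> simp; omega⟩

lemma hasSum_theta_mul_theta (hq : ‖q‖ < 1) (hq₀ : q ≠ 0) (hz : z ≠ 0) (hw : w ≠ 0) :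
    HasSum (fun x : ℤ × ℤ => q ^ (x.1 ^ 2 + x.2 ^ 2) * z ^ x.1 * w ^ x.2)
      (theta q z * theta q w) := by
  have hz := (summable_theta hq hq₀ hz).norm
  have hw := (summable_theta hq hq₀ hw).norm
  rw [theta, theta, tsum_mul_tsum_of_summable_norm hz hw]
  refine (summable_mul_of_summable_norm hz hw).hasSum.congr_fun fun x => ?_
  rw [zpow_add₀ hq₀]
  ring

/- The lattice `ℤ²` splits into the pairs `(a + b, a - b)` and `(a + b - 1, a - b)`, on each of
which the quadratic form `m² + n²` is diagonal in `(a, b)`. -/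
lemma theta_mul_theta (hq : ‖q‖ < 1) (hq₀ : q ≠ 0) (hz : z ≠ 0) (hw : w ≠ 0) :
    theta q z * theta q w = theta (q ^ 2) (z * w) * theta (q ^ 2) (z / w) +
      q / z * (theta (q ^ 2) (z * w / q ^ 2) * theta (q ^ 2) (z / (w * q ^ 2))) := by
  have hq2 := norm_pow_lt_one hq 2
  have hq2₀ := pow_ne_zero 2 hq₀
  have h_even : Function.Injective fun x : ℤ × ℤ => (x.1 + x.2, x.1 - x.2) := fun x y h => by
    simp only [Prod.mk.injEq] at h
    ext <;> omega
  have h_odd : Function.Injective fun x : ℤ × ℤ => (x.1 + x.2 - 1, x.1 - x.2) := fun x y h => by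
    simp only [Prod.mk.injEq] at h
    ext <;> omega
  let f : ℤ × ℤ → ℂ := fun x => q ^ (x.1 ^ 2 + x.2 ^ 2) * z ^ x.1 * w ^ x.2
  have h_even_sum : HasSum (fun x : ℤ × ℤ => f (x.1 + x.2, x.1 - x.2))
      (theta (q ^ 2) (z * w) * theta (q ^ 2) (z / w)) := by
    refine (hasSum_theta_mul_theta hq2 hq2₀ (mul_ne_zero hz hw) (div_ne_zero hz hw)).congr_fun
      fun x => ?_
    simp only [f]
    rw [show (x.1 + x.2) ^ 2 + (x.1 - x.2) ^ 2 = 2 * (x.1 ^ 2 + x.2 ^ 2) by ring, zpow_mul q,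
      zpow_add₀ hz, zpow_sub₀ hw, mul_zpow, div_zpow, zpow_ofNat]
    ring
  have h_odd_sum : HasSum (fun x : ℤ × ℤ => f (x.1 + x.2 - 1, x.1 - x.2)) (q / z *
      (theta (q ^ 2) (z * w / q ^ 2) * theta (q ^ 2) (z / (w * q ^ 2)))) := by
    refine ((hasSum_theta_mul_theta hq2 hq2₀ (div_ne_zero (mul_ne_zero hz hw) hq2₀)
      (div_ne_zero hz (mul_ne_zero hw hq2₀))).mul_left (q / z)).congr_fun fun x => ?_
    simp only [f]
    rw [show (x.1 + x.2 - 1) ^ 2 + (x.1 - x.2) ^ 2 =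
        2 * (x.1 ^ 2 + x.2 ^ 2) + 1 - 2 * x.1 - 2 * x.2 by ring, zpow_sub₀ hq₀, zpow_sub₀ hq₀,
      zpow_add₀ hq₀, zpow_sub₀ hz, zpow_add₀ hz, zpow_sub₀ hw, zpow_mul q, zpow_mul q, zpow_mul q]
    simp only [div_zpow, mul_zpow, zpow_ofNat]
    ring
  have h_sum : HasSum f (_ + _) := HasSum.add_isCompl isCompl_range_add_sub
    (h_even.hasSum_range_iff.2 h_even_sum) (h_odd.hasSum_range_iff.2 h_odd_sum)
  exact (hasSum_theta_mul_theta hq hq₀ hz hw).unique h_sum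

end ThetaIdentities

section ThetaEvaluations

variable {q : ℂ}

lemma theta_neg_one (hq : ‖q‖ < 1) (hq₀ : q ≠ 0) : theta q (-1) = E q ^ 2 / E (q ^ 2) := by
  have hE := eulerFun_pow_ne_zero hq 2
  rw [jacobi_triple_product hq hq₀ (by norm_num), ← qPoch_sq_mul_eulerFun hq]
  simp only [neg_mul, one_mul, neg_neg, div_neg, div_one]
  field_simp

lemma theta_self (hq : ‖q‖ < 1) (hq₀ : q ≠ 0) : theta q q = 2 * E (q ^ 4) ^ 2 / E (q ^ 2) := by
  have hq2 := norm_pow_lt_one hq 2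
  have hE := eulerFun_ne_zero hq2
  rw [jacobi_triple_product hq hq₀ hq₀, div_self hq₀, qPoch_eq_one_sub_mul_qPoch hq2 (-1), ← sq,
    show q ^ 4 = (q ^ 2) ^ 2 by ring, ← qPoch_neg_mul_eulerFun hq2, neg_one_mul]
  field_simp
  ring

lemma theta_cube_neg_sq (hq : ‖q‖ < 1) (hq₀ : q ≠ 0) :
    theta (q ^ 3) (-q ^ 2) = E q * E (q ^ 6) ^ 2 / (E (q ^ 2) * E (q ^ 3)) := by
  rw [jacobi_triple_product (norm_pow_lt_one hq 3) (pow_ne_zero 3 hq₀)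
      (neg_ne_zero.2 (pow_ne_zero 2 hq₀)), show -(q ^ 3 / -q ^ 2) = q by field_simp,
    show -(-q ^ 2 * q ^ 3) = q ^ 5 by ring, ← pow_mul, mul_comm (qPoch _ _),
    qPoch_mul_qPoch_six hq]
  ring

lemma qPoch_neg_mul_qPoch_neg_sq (hq : ‖q‖ < 1) :
    qPoch (-q) (q ^ 3) * qPoch (-q ^ 2) (q ^ 3) =
      E (q ^ 2) * E (q ^ 3) / (E q * E (q ^ 6)) := by
  have h_one := qPoch_neg_mul_eulerFun hq
  have h_three := qPoch_neg_mul_eulerFun (norm_pow_lt_one hq 3)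
  have h_split := qPoch_eq_prod_qPoch_pow hq (-q) 3
  simp only [prod_range_succ, range_zero, prod_empty, one_mul, neg_mul,
    ← pow_succ'] at h_split
  rw [← pow_mul] at h_three
  rw [eq_div_iff (mul_ne_zero (eulerFun_ne_zero hq) (eulerFun_pow_ne_zero hq 6)), ← h_one,
    h_split, ← h_three]
  ring_nf

lemma theta_cube_self (hq : ‖q‖ < 1) (hq₀ : q ≠ 0) :
    theta (q ^ 3) q = E (q ^ 4) * E (q ^ 6) ^ 2 / (E (q ^ 2) * E (q ^ 12)) := by
  have h := qPoch_neg_mul_qPoch_neg_sq (norm_pow_lt_one hq 2)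
  simp only [← pow_mul, Nat.reduceMul] at h
  rw [jacobi_triple_product (norm_pow_lt_one hq 3) (pow_ne_zero 3 hq₀) hq₀,
    show q ^ 3 / q = q ^ 2 by field_simp, ← pow_succ', ← pow_mul, mul_comm (qPoch _ _), h]
  ring

end ThetaEvaluations

/-- `E(q³)³ / E(q)`, the Borweins' cubic theta function `c(q)` stripped of its factor
`3 q^(1/3)`. -/
noncomputable def cubicTheta (q : ℂ) : ℂ := E (q ^ 3) ^ 3 / E q

local notation "c" => cubicTheta

section CubicTheta

variable {q : ℂ}

lemma cubicTheta_ne_zero (hq : ‖q‖ < 1) : c q ≠ 0 :=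
  div_ne_zero (pow_ne_zero 3 (eulerFun_pow_ne_zero hq 3)) (eulerFun_ne_zero hq)

lemma cubicTheta_mul_neg (hq : ‖q‖ < 1) : c q * c (-q) * c (q ^ 4) = c (q ^ 2) ^ 3 := by
  have h_one := eulerFun_neg_mul_eulerFun hq
  have h_three := eulerFun_neg_mul_eulerFun (norm_pow_lt_one hq 3)
  simp only [← pow_mul, Nat.reduceMul] at h_three
  simp only [cubicTheta, neg_pow q 3, ← pow_mul, Nat.reduceMul, div_mul_div_comm, div_pow,
    (by decide : Odd 3).neg_one_pow, neg_one_mul]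
  rw [h_one, ← mul_pow, ← mul_pow, h_three]
  ring

lemma theta_cube_sq_mul_theta_cube_neg_one (hq : ‖q‖ < 1) (hq₀ : q ≠ 0) :
    theta (q ^ 3) (q ^ 2) * theta (q ^ 3) (-1) =
      E (q ^ 2) ^ 2 * E (q ^ 12) / (E (q ^ 4) * E (q ^ 6) ^ 2) * c q := by
  have h_one := eulerFun_neg_mul_eulerFun hq
  have h_three := eulerFun_neg_mul_eulerFun (norm_pow_lt_one hq 3)
  have h_theta := theta_cube_neg_sq (q := -q) (by simpa using hq) (neg_ne_zero.2 hq₀)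
  simp only [← pow_mul, Nat.reduceMul] at h_three
  rw [Odd.neg_pow (by decide), Even.neg_pow (by decide), Even.neg_pow (by decide), theta_neg,
    neg_neg] at h_theta
  have h1 := eulerFun_ne_zero hq
  have h2 := eulerFun_pow_ne_zero hq 2
  have h3 := eulerFun_pow_ne_zero hq 3
  have h4 := eulerFun_pow_ne_zero hq 4
  have h6 := eulerFun_pow_ne_zero hq 6
  have h12 := eulerFun_pow_ne_zero hq 12
  rw [h_theta, theta_neg_one (norm_pow_lt_one hq 3) (pow_ne_zero 3 hq₀), cubicTheta, ← pow_mul]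
  rw [eq_div_of_mul_eq (mul_ne_zero h1 h4) (by linear_combination h_one :
      E (-q) * (E q * E (q ^ 4)) = E (q ^ 2) ^ 3),
    eq_div_of_mul_eq (mul_ne_zero h3 h12) (by linear_combination h_three :
      E (-q ^ 3) * (E (q ^ 3) * E (q ^ 12)) = E (q ^ 6) ^ 3)]
  field_simp

lemma theta_cube_sq_mul_theta_cube_neg_one_eq_add (hq : ‖q‖ < 1) (hq₀ : q ≠ 0) :
    theta (q ^ 3) (q ^ 2) * theta (q ^ 3) (-1) = theta (q ^ 6) (-q ^ 2) ^ 2 +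
      q * (E (q ^ 2) * E (q ^ 12) ^ 2 / (E (q ^ 4) * E (q ^ 6))) ^ 2 := by
  have hq2₀ := pow_ne_zero 2 hq₀
  have h_theta := theta_cube_neg_sq (norm_pow_lt_one hq 2) hq2₀
  simp only [← pow_mul, Nat.reduceMul] at h_theta
  rw [theta_mul_theta (norm_pow_lt_one hq 3) (pow_ne_zero 3 hq₀) hq2₀ (neg_ne_zero.2 one_ne_zero),
    show (q ^ 3) ^ 2 = q ^ 6 by ring, show q ^ 2 * -1 = -q ^ 2 by ring,
    show q ^ 2 / -1 = -q ^ 2 by ring,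
    show -q ^ 2 / q ^ 6 = (-q ^ 4)⁻¹ by field_simp,
    show q ^ 2 / (-1 * q ^ 6) = (-q ^ 4)⁻¹ by field_simp,
    show q ^ 3 / q ^ 2 = q by field_simp, theta_inv, h_theta]
  ring

lemma cubicTheta_sub_cubicTheta_neg (hq : ‖q‖ < 1) (hq₀ : q ≠ 0) :
    c q - c (-q) = 2 * q * c (q ^ 4) := by
  have hq_neg : ‖-q‖ < 1 := by simpa using hq
  have h2 := eulerFun_pow_ne_zero hq 2
  have h4 := eulerFun_pow_ne_zero hq 4
  have h6 := eulerFun_pow_ne_zero hq 6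
  have h12 := eulerFun_pow_ne_zero hq 12
  have h_pos := theta_cube_sq_mul_theta_cube_neg_one hq hq₀
  have h_neg := theta_cube_sq_mul_theta_cube_neg_one hq_neg (neg_ne_zero.2 hq₀)
  rw [theta_cube_sq_mul_theta_cube_neg_one_eq_add hq hq₀] at h_pos
  rw [theta_cube_sq_mul_theta_cube_neg_one_eq_add hq_neg (neg_ne_zero.2 hq₀)] at h_neg
  simp only [Even.neg_pow (by decide : Even 2), Even.neg_pow (by decide : Even 4),
    Even.neg_pow (by decide : Even 6), Even.neg_pow (by decide : Even 12)] at h_neg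
  have h_coeff : E (q ^ 2) ^ 2 * E (q ^ 12) / (E (q ^ 4) * E (q ^ 6) ^ 2) ≠ 0 := by positivity
  refine mul_left_cancel₀ h_coeff ?_
  rw [mul_sub, ← h_pos, ← h_neg, cubicTheta, ← pow_mul]
  field_simp
  ring

end CubicTheta

section DesignatedSummands

open PowerSeries
open scoped PowerSeries.WithPiTopology

variable {q : ℂ}

lemma summable_of_tendsto_of_hasSum_le {ι κ : Type*} {l : Filter κ} [l.NeBot] {b : κ → ι → ℝ}
    {a : ι → ℝ} {s : κ → ℝ} {C : ℝ} (hb_nonneg : ∀ k i, 0 ≤ b k i)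
    (hb : ∀ k, HasSum (b k) (s k)) (hs : ∀ k, s k ≤ C)
    (ha : ∀ i, Tendsto (b · i) l (𝓝 (a i))) : Summable a :=
  summable_of_sum_le (fun i => ge_of_tendsto' (ha i) fun k => hb_nonneg k i) fun t =>
    le_of_tendsto' (tendsto_finsetSum t fun i _ => ha i) fun k =>
      (sum_le_hasSum t (fun i _ => hb_nonneg k i) (hb k)).trans (hs k)

lemma hasSum_natCast_mul_pow_of_tendsto {b : ℕ → ℕ → ℕ} {a : ℕ → ℕ} {F : ℕ → ℂ → ℂ} {f : ℂ → ℂ}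
    (h_le : ∀ N n, b N n ≤ a n) (h_lim : ∀ n, Tendsto (b · n) atTop (𝓝 (a n)))
    (hF : ∀ N q, ‖q‖ < 1 → HasSum (fun n => (b N n : ℂ) * q ^ n) (F N q))
    (hf : ∀ q, ‖q‖ < 1 → Tendsto (F · q) atTop (𝓝 (f q))) (hq : ‖q‖ < 1) :
    HasSum (fun n => (a n : ℂ) * q ^ n) (f q) := by
  have h_real : ‖(‖q‖ : ℂ)‖ < 1 := by simpa using hq
  obtain ⟨C, hC⟩ := (Metric.isBounded_range_of_tendsto _ (hf _ h_real)).exists_norm_le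
  have h_cast (n : ℕ) (x : ℝ) : Tendsto (fun N => (b N n : ℝ) * x) atTop (𝓝 (a n * x)) :=
    (((continuous_of_discreteTopology (f := ((↑) : ℕ → ℝ))).tendsto _).comp (h_lim n)).mul_const x
  have h_bound : Summable fun n => (a n : ℝ) * ‖q‖ ^ n := by
    refine summable_of_tendsto_of_hasSum_le (l := atTop) (b := fun N n => (b N n : ℝ) * ‖q‖ ^ n)
      (s := fun N => (F N ‖q‖).re) (C := C) (fun N n => by positivity) (fun N => ?_)
      (fun N => (Complex.re_le_norm _).trans (hC _ ⟨N, rfl⟩)) fun n => h_cast n _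
    simpa [← Complex.ofReal_pow] using Complex.hasSum_re (hF N _ h_real)
  have h_summable : Summable fun n => (a n : ℂ) * q ^ n := .of_norm (by simpa using h_bound)
  refine h_summable.hasSum_iff.2 (tendsto_nhds_unique ?_ (hf q hq))
  simp only [← (hF _ q hq).tsum_eq]
  refine tendsto_tsum_of_dominated_convergence h_bound (fun n => ?_) (.of_forall fun N n => ?_)
  · exact (((continuous_of_discreteTopology (f := ((↑) : ℕ → ℂ))).tendsto _).comp
      (h_lim n)).mul_const _
  · rw [norm_mul, norm_pow, Complex.norm_natCast]
    gcongr
    exact h_le N n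

/-- The power series `p` converges at `q` to `v`. -/
def HasValueAt (p : ℕ⟦X⟧) (q v : ℂ) : Prop :=
  HasSum (fun n => ((coeff n p : ℕ) : ℂ) * q ^ n) v

lemma HasValueAt.one (q : ℂ) : HasValueAt 1 q 1 := by
  refine (hasSum_ite_eq 0 (1 : ℂ)).congr_fun fun n => ?_
  rw [coeff_one]
  split_ifs with hn <;> simp [hn]

lemma HasValueAt.mul {p r : ℕ⟦X⟧} {v w : ℂ} (hp : HasValueAt p q v) (hr : HasValueAt r q w) :
    HasValueAt (p * r) q (v * w) := by
  have h_tsum := tsum_mul_tsum_eq_tsum_sum_antidiagonal_of_summable_norm hp.summable.norm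
    hr.summable.norm
  have h_summable := (summable_norm_sum_mul_antidiagonal_of_summable_norm hp.summable.norm
    hr.summable.norm).of_norm
  rw [hp.tsum_eq, hr.tsum_eq] at h_tsum
  refine (h_tsum ▸ h_summable.hasSum).congr_fun fun n => ?_
  rw [coeff_mul, Nat.cast_sum, sum_mul]
  refine sum_congr rfl fun x hx => ?_
  rw [← mem_antidiagonal.1 hx, pow_add, Nat.cast_mul]
  ring

lemma HasValueAt.prod {ι : Type*} {s : Finset ι} {p : ι → ℕ⟦X⟧} {v : ι → ℂ}
    (h : ∀ i ∈ s, HasValueAt (p i) q (v i)) : HasValueAt (∏ i ∈ s, p i) q (∏ i ∈ s, v i) := by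
  induction s using Finset.cons_induction with
  | empty => simpa using HasValueAt.one q
  | cons i s hi ih =>
    rw [prod_cons, prod_cons]
    exact (h i (mem_cons_self i s)).mul (ih fun j hj => h j (mem_cons_of_mem hj))

/-- The series `1 + ∑_{m ≥ 1} m X^(m (i + 1))` counting the ways to use the part `i + 1` with one
occurrence designated; its shape is that of the factors in `Nat.Partition.hasProd_genFun`. -/
noncomputable def designatedPartSeries (i : ℕ) : ℕ⟦X⟧ :=
  1 + ∑' j : ℕ, (j + 1) • (X : ℕ⟦X⟧) ^ ((i + 1) * (j + 1))

lemma coeff_designatedPartSeries (i n : ℕ) : coeff n (designatedPartSeries i) =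
    (if n = 0 then 1 else 0) + if i + 1 ∣ n then n / (i + 1) else 0 := by
  have h_summable : Summable fun j : ℕ => (j + 1) • (X : ℕ⟦X⟧) ^ ((i + 1) * (j + 1)) :=
    Nat.Partition.summable_genFun_term (fun _ m => m : ℕ → ℕ → ℕ) i
  rw [designatedPartSeries, map_add, coeff_one,
    h_summable.map_tsum _ (WithPiTopology.continuous_coeff ℕ n)]
  simp only [map_nsmul, coeff_X_pow, smul_eq_mul, mul_ite, mul_one, mul_zero]
  congr 1
  split_ifs with h_dvd
  · obtain ⟨_ | k, rfl⟩ := h_dvd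
    · simp
    · simp [eq_comm]
  · exact (tsum_congr fun j => if_neg fun h => h_dvd ⟨j + 1, h⟩).trans tsum_zero

lemma hasValueAt_designatedPartSeries (hq : ‖q‖ < 1) (i : ℕ) :
    HasValueAt (designatedPartSeries i) q (1 + q ^ (i + 1) / (1 - q ^ (i + 1)) ^ 2) := by
  have h_mult : HasSum (fun n => ((if i + 1 ∣ n then n / (i + 1) else 0 : ℕ) : ℂ) * q ^ n)
      (q ^ (i + 1) / (1 - q ^ (i + 1)) ^ 2) := by
    refine ((mul_right_injective₀ i.succ_ne_zero).hasSum_iff fun n hn => ?_).1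
      ((hasSum_coe_mul_geometric_of_norm_lt_one (norm_pow_lt_one hq (i + 1))).congr_fun
        fun m => ?_)
    · rw [if_neg fun ⟨m, hm⟩ => hn ⟨m, hm.symm⟩, Nat.cast_zero, zero_mul]
    · simp [pow_mul]
  refine ((hasSum_ite_eq 0 (1 : ℂ)).add h_mult).congr_fun fun n => ?_
  rw [coeff_designatedPartSeries, Nat.cast_add, add_mul]
  congr 1
  split_ifs with hn <;> simp [hn]

lemma tendsto_coeff_prod_designatedPartSeries (n : ℕ) :
    Tendsto (fun N => coeff n (∏ i ∈ range N, designatedPartSeries i)) atTop (𝓝 (PD n)) := by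
  have h_prod : HasProd designatedPartSeries (Nat.Partition.genFun fun _ m => m) :=
    Nat.Partition.hasProd_genFun (fun _ m => m : ℕ → ℕ → ℕ)
  have h_coeff : coeff n (Nat.Partition.genFun fun _ m => m : ℕ⟦X⟧) = PD n := by
    simp [Nat.Partition.coeff_genFun, PD, Finsupp.prod]
  exact h_coeff ▸ (WithPiTopology.tendsto_iff_coeff_tendsto ..).1 h_prod.tendsto_prod_nat n

lemma monotone_coeff_prod_designatedPartSeries (n : ℕ) :
    Monotone fun N => coeff n (∏ i ∈ range N, designatedPartSeries i) := by
  refine monotone_nat_of_le_succ fun N => ?_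
  rw [prod_range_succ, designatedPartSeries, mul_add, mul_one, map_add]
  exact Nat.le_add_right _ _

lemma one_add_div_one_sub_sq {K : Type*} [Field K] {x : K} (h_one : 1 - x ≠ 0)
    (h_two : 1 - x ^ 2 ≠ 0) (h_three : 1 - x ^ 3 ≠ 0) :
    1 + x / (1 - x) ^ 2 = (1 - x ^ 6) / ((1 - x) * (1 - x ^ 2) * (1 - x ^ 3)) := by
  field_simp
  ring

lemma tendsto_prod_one_add_div_one_sub_sq (hq : ‖q‖ < 1) :
    Tendsto (fun N => ∏ i ∈ range N, (1 + q ^ (i + 1) / (1 - q ^ (i + 1)) ^ 2)) atTop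
      (𝓝 (E (q ^ 6) / (E q * E (q ^ 2) * E (q ^ 3)))) := by
  have h_euler (k : ℕ) [NeZero k] :
      Tendsto (fun N => ∏ i ∈ range N, (1 - (q ^ (i + 1)) ^ k)) atTop (𝓝 (E (q ^ k))) := by
    refine (tendsto_qPoch (norm_pow_lt_one hq k) (q ^ k)).congr fun N =>
      prod_congr rfl fun i _ => ?_
    rw [← pow_succ', pow_right_comm]
  have h_ne (k i : ℕ) [NeZero k] : 1 - (q ^ (i + 1)) ^ k ≠ 0 := by
    have hqk := norm_pow_lt_one hq k
    simpa [← pow_succ', pow_right_comm] using one_sub_mul_pow_ne_zero hqk hqk i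
  have h_one := h_euler 1
  simp only [pow_one] at h_one
  refine ((h_euler 6).div ((h_one.mul (h_euler 2)).mul (h_euler 3)) (mul_ne_zero (mul_ne_zero
    (eulerFun_ne_zero hq) (eulerFun_pow_ne_zero hq 2)) (eulerFun_pow_ne_zero hq 3))).congr
    fun N => ?_
  simp only [Pi.div_apply, ← prod_mul_distrib, ← prod_div_distrib]
  exact prod_congr rfl fun i _ =>
    (one_add_div_one_sub_sq (by simpa using h_ne 1 i) (h_ne 2 i) (h_ne 3 i)).symm

lemma hasSum_PD (hq : ‖q‖ < 1) :
    HasSum (fun n => (PD n : ℂ) * q ^ n) (E (q ^ 6) / (E q * E (q ^ 2) * E (q ^ 3))) :=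
  hasSum_natCast_mul_pow_of_tendsto (f := fun q => E (q ^ 6) / (E q * E (q ^ 2) * E (q ^ 3)))
    (fun N n => (monotone_coeff_prod_designatedPartSeries n).ge_of_tendsto
      (tendsto_coeff_prod_designatedPartSeries n) N)
    tendsto_coeff_prod_designatedPartSeries
    (fun _ _ hq => HasValueAt.prod fun i _ => hasValueAt_designatedPartSeries hq i)
    (fun _ hq => tendsto_prod_one_add_div_one_sub_sq hq) hq

end DesignatedSummands

section Trisection

variable {q t : ℂ}

lemma eulerFun_sq_div_eulerFun_sq (ht : ‖t‖ < 1) (ht₀ : t ≠ 0) :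
    E t ^ 2 / E (t ^ 2) = E (t ^ 9) ^ 2 / E (t ^ 18) -
      2 * t * (E (t ^ 3) * E (t ^ 18) ^ 2 / (E (t ^ 6) * E (t ^ 9))) := by
  have h_neg_one := theta_neg_one (norm_pow_lt_one ht 9) (pow_ne_zero 9 ht₀)
  have h_neg_sq := theta_cube_neg_sq (norm_pow_lt_one ht 3) (pow_ne_zero 3 ht₀)
  simp only [← pow_mul, Nat.reduceMul] at h_neg_one h_neg_sq
  rw [← theta_neg_one ht ht₀, theta_eq_add_three ht ht₀ (neg_ne_zero.2 one_ne_zero),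
    show (-1 : ℂ) ^ 3 = -1 by norm_num, show -1 / t ^ 6 = (-1 * t ^ 6)⁻¹ by field_simp, theta_inv,
    neg_one_mul, h_neg_one, h_neg_sq]
  ring

lemma eulerFun_sq_sq_div_eulerFun (ht : ‖t‖ < 1) (ht₀ : t ≠ 0) :
    E (t ^ 2) ^ 2 / E t = E (t ^ 6) * E (t ^ 9) ^ 2 / (E (t ^ 3) * E (t ^ 18)) +
      t * (E (t ^ 18) ^ 2 / E (t ^ 9)) := by
  obtain ⟨s, rfl⟩ : ∃ s : ℂ, s ^ 2 = t := IsAlgClosed.exists_pow_nat_eq t two_pos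
  have hs₀ : s ≠ 0 := by simpa using ht₀
  have hs : ‖s‖ < 1 := by simpa using ht
  have h_one := theta_self hs hs₀
  have h_nine := theta_self (norm_pow_lt_one hs 9) (pow_ne_zero 9 hs₀)
  have h_cube := theta_cube_self (norm_pow_lt_one hs 3) (pow_ne_zero 3 hs₀)
  simp only [← pow_mul, Nat.reduceMul] at h_nine h_cube ⊢
  rw [theta_eq_add_three hs hs₀ hs₀, div_self hs₀, ← pow_add,
    show s ^ 3 / s ^ 6 = (s ^ 3)⁻¹ by field_simp, theta_inv, h_nine, h_cube] at h_one
  linear_combination -h_one / 2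

lemma eulerFun_mul_eulerFun_sq (hq : ‖q‖ < 1) (hq₀ : q ≠ 0) (ht : t ^ 3 = q) :
    E t * E (t ^ 2) = E (q ^ 2) * E (q ^ 3) ^ 4 / (E q * E (q ^ 6) ^ 2) -
      t * (E (q ^ 3) * E (q ^ 6)) -
      t ^ 2 * (2 * E q * E (q ^ 6) ^ 4 / (E (q ^ 2) * E (q ^ 3) ^ 2)) := by
  subst ht
  have ht₀ : t ≠ 0 := by simpa using hq₀
  have ht : ‖t‖ < 1 := norm_pow_lt_one_iff.1 hq
  have h1 := eulerFun_ne_zero ht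
  have h2 := eulerFun_pow_ne_zero ht 2
  have h3 := eulerFun_pow_ne_zero ht 3
  have h6 := eulerFun_pow_ne_zero ht 6
  have h9 := eulerFun_pow_ne_zero ht 9
  have h18 := eulerFun_pow_ne_zero ht 18
  simp only [← pow_mul, Nat.reduceMul]
  calc E t * E (t ^ 2) = E t ^ 2 / E (t ^ 2) * (E (t ^ 2) ^ 2 / E t) := by field_simp
    _ = _ := by
      rw [eulerFun_sq_div_eulerFun_sq ht ht₀, eulerFun_sq_sq_div_eulerFun ht ht₀]
      field_simp
      ring

lemma sum_pow_pow_eq_ite {R : Type*} [CommRing R] [IsDomain R] {ω : R} {k : ℕ}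
    (hω : IsPrimitiveRoot ω k) (n : ℕ) :
    ∑ j ∈ range k, (ω ^ j) ^ n = if k ∣ n then (k : R) else 0 := by
  simp only [pow_right_comm ω _ n]
  split_ifs with h
  · simp [(hω.pow_eq_one_iff_dvd n).2 h]
  · have h_ne : ω ^ n - 1 ≠ 0 := sub_ne_zero.2 fun h_one => h (hω.dvd_of_pow_eq_one n h_one)
    refine mul_right_cancel₀ h_ne ?_
    rw [geom_sum_mul, pow_right_comm, hω.pow_eq_one, one_pow, sub_self, zero_mul]

lemma sum_tsum_mul_pow_eq {a : ℕ → ℂ} {ω : ℂ} {k : ℕ} (hω : IsPrimitiveRoot ω k) (hk : k ≠ 0)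
    (h : ∀ j ∈ range k, Summable fun n => a n * (ω ^ j * t) ^ n) :
    ∑ j ∈ range k, ∑' n, a n * (ω ^ j * t) ^ n = k * ∑' n, a (k * n) * (t ^ k) ^ n := by
  have h_sum (n : ℕ) : ∑ j ∈ range k, a n * (ω ^ j * t) ^ n =
      a n * t ^ n * if k ∣ n then (k : ℂ) else 0 := by
    rw [← sum_pow_pow_eq_ite hω, mul_sum]
    exact sum_congr rfl fun j _ => by ring
  rw [← Summable.tsum_finsetSum h, tsum_congr h_sum, ← tsum_mul_left,
    ← (mul_right_injective₀ hk).tsum_eq]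
  · refine tsum_congr fun n => ?_
    rw [if_pos (dvd_mul_right k n), pow_mul]
    ring
  · refine Function.support_subset_iff'.2 fun n hn => ?_
    rw [if_neg fun ⟨m, hm⟩ => hn ⟨m, hm.symm⟩, mul_zero]

lemma sum_inv_add_add {K : Type*} [Field K] {ω x y z : K} (hω : IsPrimitiveRoot ω 3)
    (h : ∀ j ∈ range 3, x + ω ^ j * y + (ω ^ j) ^ 2 * z ≠ 0) :
    ∑ j ∈ range 3, (x + ω ^ j * y + (ω ^ j) ^ 2 * z)⁻¹ =
      3 * (x ^ 2 - y * z) / ∏ j ∈ range 3, (x + ω ^ j * y + (ω ^ j) ^ 2 * z) := by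
  have h_geom := hω.geom_sum_eq_zero (by decide)
  have h0 := h 0 (by decide)
  have h1 := h 1 (by decide)
  have h2 := h 2 (by decide)
  simp only [sum_range_succ, prod_range_succ, range_zero, sum_empty, prod_empty, zero_add, one_mul,
    pow_zero, pow_one, one_pow] at h_geom h0 h1 h2 ⊢
  rw [inv_add_inv h0 h1, inv_eq_one_div, div_add_div _ _ (mul_ne_zero h0 h1) h2]
  congr 1
  linear_combination (2 * x * y + 2 * (ω ^ 2 - ω + 1) * x * z + ω * y ^ 2 +
    ω ^ 2 * (ω ^ 2 - ω + 1) * z ^ 2 + (ω ^ 3 + ω ^ 2 - 2 * ω + 3) * y * z) * h_geom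

lemma prod_eulerFun_cubeRoot (hq : ‖q‖ < 1) (ht : t ^ 3 = q) {ω : ℂ} (hω : IsPrimitiveRoot ω 3) :
    ∏ j ∈ range 3, E (ω ^ j * t) = E q ^ 4 / E (q ^ 3) := by
  subst ht
  rw [eq_div_iff (eulerFun_pow_ne_zero hq 3), ← pow_mul]
  exact prod_eulerFun_pow_mul (norm_pow_lt_one_iff.1 hq) Nat.prime_three hω

lemma sum_inv_eulerFun_mul_eulerFun_sq (hq : ‖q‖ < 1) (hq₀ : q ≠ 0) (ht : t ^ 3 = q) {ω : ℂ}
    (hω : IsPrimitiveRoot ω 3) :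
    ∑ j ∈ range 3, (E (ω ^ j * t) * E ((ω ^ j * t) ^ 2))⁻¹ =
      3 * (E (q ^ 3) ^ 9 / (E q ^ 6 * E (q ^ 2) ^ 2 * E (q ^ 6) ^ 3) -
        2 * q * E (q ^ 6) ^ 6 / (E q ^ 3 * E (q ^ 2) ^ 5)) := by
  have h1 := eulerFun_ne_zero hq
  have h2 := eulerFun_pow_ne_zero hq 2
  have h3 := eulerFun_pow_ne_zero hq 3
  have h6 := eulerFun_pow_ne_zero hq 6
  have h_root (j : ℕ) : (ω ^ j * t) ^ 3 = q := by
    rw [isPrimitiveRoot_pow_mul_pow hω, ht]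
  have h_norm (j : ℕ) : ‖ω ^ j * t‖ < 1 := norm_pow_lt_one_iff.1 ((h_root j).symm ▸ hq)
  have h_dissect (j : ℕ) : E (ω ^ j * t) * E ((ω ^ j * t) ^ 2) =
      E (q ^ 2) * E (q ^ 3) ^ 4 / (E q * E (q ^ 6) ^ 2) +
        ω ^ j * (-t * (E (q ^ 3) * E (q ^ 6))) +
        (ω ^ j) ^ 2 * (-t ^ 2 * (2 * E q * E (q ^ 6) ^ 4 / (E (q ^ 2) * E (q ^ 3) ^ 2))) := by
    rw [eulerFun_mul_eulerFun_sq hq hq₀ (h_root j)]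
    ring
  have h_prod : ∏ j ∈ range 3, E (ω ^ j * t) * E ((ω ^ j * t) ^ 2) =
      E q ^ 4 / E (q ^ 3) * (E (q ^ 2) ^ 4 / E (q ^ 6)) := by
    have h_sq := prod_eulerFun_cubeRoot (t := t ^ 2) (norm_pow_lt_one hq 2)
      (by rw [pow_right_comm, ht]) (hω.pow_of_coprime 2 (by decide))
    rw [← pow_mul] at h_sq
    simp only [prod_mul_distrib, mul_pow, pow_right_comm ω _ 2]
    rw [prod_eulerFun_cubeRoot hq ht hω, h_sq]
  have h_ne : ∀ j ∈ range 3, E (ω ^ j * t) * E ((ω ^ j * t) ^ 2) ≠ 0 := fun j _ =>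
    mul_ne_zero (eulerFun_ne_zero (h_norm j)) (eulerFun_pow_ne_zero (h_norm j) 2)
  simp only [h_dissect] at h_prod h_ne ⊢
  rw [sum_inv_add_add hω h_ne, h_prod]
  field_simp
  rw [ht]
  ring

lemma tsum_PD_three_mul (hq : ‖q‖ < 1) (hq₀ : q ≠ 0) :
    ∑' n, (PD (3 * n) : ℂ) * q ^ n = E (q ^ 3) ^ 9 / (E q ^ 7 * E (q ^ 2) * E (q ^ 6) ^ 3) -
      2 * q * E (q ^ 6) ^ 6 / (E q ^ 4 * E (q ^ 2) ^ 4) := by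
  obtain ⟨t, ht⟩ : ∃ t : ℂ, t ^ 3 = q := IsAlgClosed.exists_pow_nat_eq q three_pos
  obtain ⟨ω, hω⟩ : ∃ ω : ℂ, IsPrimitiveRoot ω 3 := ⟨_, Complex.isPrimitiveRoot_exp 3 three_ne_zero⟩
  have h_root (j : ℕ) : (ω ^ j * t) ^ 3 = q := by
    rw [isPrimitiveRoot_pow_mul_pow hω, ht]
  have h_PD (j : ℕ) : HasSum (fun n => (PD n : ℂ) * (ω ^ j * t) ^ n)
      (E (q ^ 2) / E q * (E (ω ^ j * t) * E ((ω ^ j * t) ^ 2))⁻¹) := by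
    convert hasSum_PD (norm_pow_lt_one_iff.1 ((h_root j).symm ▸ hq)) using 1
    rw [← h_root j]
    ring_nf
  have h_filter := sum_tsum_mul_pow_eq hω three_ne_zero fun j _ => (h_PD j).summable
  simp only [fun j => (h_PD j).tsum_eq] at h_filter
  rw [← mul_sum, sum_inv_eulerFun_mul_eulerFun_sq hq hq₀ ht hω, ht] at h_filter
  have h1 := eulerFun_ne_zero hq
  have h2 := eulerFun_pow_ne_zero hq 2
  refine mul_left_cancel₀ (Nat.cast_ne_zero.2 three_ne_zero) (h_filter.symm.trans ?_)
  push_cast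
  field_simp

end Trisection

section EvenFunction

variable {q : ℂ}

lemma qPoch_residues_eq (hq : ‖q‖ < 1) :
    qPoch q (q ^ 6) ^ 5 * qPoch (q ^ 3) (q ^ 6) ^ 2 * qPoch (q ^ 5) (q ^ 6) ^ 5 =
      E q ^ 5 * E (q ^ 6) ^ 3 / (E (q ^ 2) ^ 5 * E (q ^ 3) ^ 3) := by
  have h_three := qPoch_sq_mul_eulerFun (norm_pow_lt_one hq 3)
  rw [← pow_mul, ← eq_div_iff (eulerFun_pow_ne_zero hq 6)] at h_three
  have h3 := eulerFun_pow_ne_zero hq 3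
  have h6 := eulerFun_pow_ne_zero hq 6
  rw [mul_right_comm, ← mul_pow, qPoch_mul_qPoch_six hq, h_three]
  field_simp

lemma G_eq_cubicTheta_sq (hq : ‖q‖ < 1) (hq₀ : q ≠ 0) :
    G q = (c q ^ 2 - 2 * q * (c (q ^ 2) ^ 3 / c q)) / E (q ^ 2) ^ 6 := by
  have h1 := eulerFun_ne_zero hq
  have h2 := eulerFun_pow_ne_zero hq 2
  have h3 := eulerFun_pow_ne_zero hq 3
  have h6 := eulerFun_pow_ne_zero hq 6
  simp only [G, tsum_PD_three_mul hq hq₀, qPoch_residues_eq hq, cubicTheta, ← pow_mul,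
    Nat.reduceMul]
  field_simp

lemma G_eq_cubicTheta_mul_neg (hq : ‖q‖ < 1) (hq₀ : q ≠ 0) :
    G q = (c q ^ 2 - c q * c (-q) + c (-q) ^ 2) / E (q ^ 2) ^ 6 := by
  have h_div : c (q ^ 2) ^ 3 / c q = c (-q) * c (q ^ 4) := by
    rw [← cubicTheta_mul_neg hq, mul_assoc, mul_div_cancel_left₀ _ (cubicTheta_ne_zero hq)]
  rw [G_eq_cubicTheta_sq hq hq₀, h_div]
  linear_combination (c (-q) / E (q ^ 2) ^ 6) * cubicTheta_sub_cubicTheta_neg hq hq₀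

end EvenFunction

end QSeries

theorem G_even (q : ℂ) (hq : ‖q‖ < 1) : G q = G (-q) := by
  rcases eq_or_ne q 0 with rfl | hq₀
  · rw [neg_zero]
  · rw [QSeries.G_eq_cubicTheta_mul_neg hq hq₀,
      QSeries.G_eq_cubicTheta_mul_neg (by simpa using hq) (neg_ne_zero.2 hq₀), neg_neg, neg_sq]
    ring
end
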